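/- arXiv:2401.01135 — 2 statements merged into one kernel-verified Lean document; each statement's English description precedes it below -/
import Mathlib

section
/- Let q = p^e with p an odd prime and e a positive integer, let m ≥ 3 be odd, and set l = e(p−1)(m+3)/4. Then the augmented code \overline{C_D} has length q^{m−1}, dimension m + 1, and minimum distance (q−1)q^{(m−3)/2}(q^{(m−1)/2} − 1), and the multiset of Hamming weights of its codewords consists of: weight 0 with multiplicity 1; weight q^{m−1} with multiplicity q − 1; weight (q−1)q^{m−2} with multiplicity q(q^{m−1} − 1); weight (q−1)q^{m−2} + (−1)^l q^{(m−3)/2} with multiplicity (q−1)²(q^{m−1} + (−1)^l q^{(m−1)/2})/2; weight (q−1)q^{m−2} − (−1)^l q^{(m−3)/2} with multiplicity (q−1)²(q^{m−1} + (−1)^{l+1} q^{(m−1)/2})/2; weight (q−1)q^{m−2} − (−1)^l (q−1) q^{(m−3)/2} with multiplicity (q−1)(q^{m−1} + (−1)^l q^{(m−1)/2})/2; and weight (q−1)q^{m−2} + (−1)^l (q−1) q^{(m−3)/2} with multiplicity (q−1)(q^{m−1} + (−1)^{l+1} q^{(m−1)/2})/2. Moreover, if m > 3 then \overline{C_D}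 is self-orthogonal (\overline{C_D} ⊆ \overline{C_D}^⊥), and the dual code \overline{C_D}^⊥ has length q^{m−1}, dimension q^{m−1} − m − 1 and minimum distance 3. -/
open scoped Classical

noncomputable section

/-- The augmented code `\overline{C_D}` of the defining set `D = {x : K // P x}`:
codewords are `(Tr_{K/F}(b d) + c)_{d ∈ D}` for `b ∈ K`, `c ∈ F`. -/
def augCode (F K : Type*) [Field F] [Field K] [Algebra F K] (P : K → Prop) :
    Set ({x : K // P x} → F) :=
  {w | ∃ b : K, ∃ c : F, ∀ d : {x : K // P x}, w d = Algebra.trace F K (b * d.1) + c}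

/-- The dual code under the standard inner product. -/
def dualCode {ι F : Type*} [Fintype ι] [CommRing F] (C : Set (ι → F)) : Set (ι → F) :=
  {u | ∀ v ∈ C, ∑ i, u i * v i = 0}

/-- `d` is the minimum distance of the code `C`: the smallest Hamming weight of a
nonzero codeword. -/
def IsMinDist {ι F : Type*} [Fintype ι] [CommRing F] (C : Set (ι → F)) (d : ℕ) : Prop :=
  (∃ c ∈ C, c ≠ 0 ∧ hammingNorm c = d) ∧ ∀ c ∈ C, c ≠ 0 → d ≤ hammingNorm c

/-!
Let `B (x, y) = Tr (x y)` be the trace form, a nondegenerate symmetric form of odd dimension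
`m = 2 k + 3`, so that `D` is the quadric `B (x, x) = 0`. The weight of `(Tr (b x) + c)_{x ∈ D}` is
`|D|` minus the number of points of `D` on the affine hyperplane `B (b, x) = -c`. Expanding the two
equations in additive characters and completing the square reduces that number to powers of the
quadratic Gauss sum: it depends only on whether `c = 0` and on a sign `κ b ∈ {0, 1, -1}`, the
quadratic character of `B (b, b)` times a constant of the form. The frequencies of the three values
of `κ` follow from `∑ κ b` and `∑ (κ b) ^ 2`. Replacing `(-1) ^ l` by its negative merely exchanges
the classes of `κ b = 1` and `κ b = -1` in the weight distribution.

For `m > 3` all point counts are divisible by `q`, hence every codeword has square norm zero, and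
polarization gives self-orthogonality. Since the code contains the constants and separates the
points of `D`, its dual has no words of weight at most two, while the points `x, -x, 0` of `D` carry
the dual word `(1, 1, -2)`.
-/

open Finset

/-- The quadratic character of a finite field with values in `ℂ` rather than `ℤ`, so that it has
Gauss sums with respect to complex additive characters. -/
def complexQuadraticChar (F : Type*) [Field F] [Fintype F] : MulChar F ℂ :=
  (quadraticChar F).ringHomComp (Int.castRingHom ℂ)

local notation "η" => complexQuadraticChar _

section GaussSums

variable {F : Type*} [Field F] [Fintype F]

lemma ringChar_ne_two_of_odd_card (h : Odd (Fintype.card F)) : ringChar F ≠ 2 := fun h2 ↦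
  Nat.not_even_iff_odd.2 h (Nat.even_iff.2 (FiniteField.even_card_of_char_two h2))

lemma complexQuadraticChar_apply (a : F) : η a = (quadraticChar F a : ℤ) := rfl

lemma complexQuadraticChar_isQuadratic : (complexQuadraticChar F).IsQuadratic :=
  (quadraticChar_isQuadratic F).comp _

lemma complexQuadraticChar_zero : η (0 : F) = 0 := MulChar.map_zero _

lemma complexQuadraticChar_mul_self {a : F} (ha : a ≠ 0) : η a * η a = 1 := by
  rw [complexQuadraticChar_apply, ← sq]
  exact_mod_cast quadraticChar_sq_one ha

lemma sum_complexQuadraticChar (hF : ringChar F ≠ 2) : ∑ a : F, η a = 0 := by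
  simp only [complexQuadraticChar_apply]
  exact_mod_cast quadraticChar_sum_zero hF

lemma gaussSum_complexQuadraticChar_sq (hF : ringChar F ≠ 2) {ψ : AddChar F ℂ}
    (hψ : ψ.IsPrimitive) : gaussSum η ψ ^ 2 = η (-1 : F) * Fintype.card F :=
  gaussSum_sq ((MulChar.ringHomComp_ne_one_iff Int.cast_injective).2 (quadraticChar_ne_one hF))
    complexQuadraticChar_isQuadratic hψ

lemma gaussSum_complexQuadraticChar_ne_zero (hF : ringChar F ≠ 2) {ψ : AddChar F ℂ}
    (hψ : ψ.IsPrimitive) : gaussSum η ψ ≠ 0 := by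
  have hne : η (-1 : F) ≠ 0 := left_ne_zero_of_mul_eq_one
    (complexQuadraticChar_mul_self (neg_ne_zero.2 one_ne_zero))
  refine ne_zero_of_dvd_ne_zero ?_ (dvd_pow_self _ two_ne_zero)
  rw [gaussSum_complexQuadraticChar_sq hF hψ]
  exact mul_ne_zero hne (Nat.cast_ne_zero.2 Fintype.card_ne_zero)

lemma gaussSum_complexQuadraticChar_pow_two_mul (hF : ringChar F ≠ 2) {ψ : AddChar F ℂ}
    (hψ : ψ.IsPrimitive) (k : ℕ) :
    gaussSum η ψ ^ (2 * k) = η ((-1 : F) ^ k) * Fintype.card F ^ k := by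
  rw [pow_mul, gaussSum_complexQuadraticChar_sq hF hψ, mul_pow, map_pow]

lemma sum_complexQuadraticChar_mul_addChar (hF : ringChar F ≠ 2) (ψ : AddChar F ℂ) (a : F) :
    ∑ x, η x * ψ (a * x) = η a * gaussSum η ψ := by
  obtain rfl | ha := eq_or_ne a 0
  · simp [sum_complexQuadraticChar hF, complexQuadraticChar_zero]
  · nth_rw 2 [← complexQuadraticChar_isQuadratic.inv]
    exact gaussSum_mulShift_eq η ψ (Units.mk0 a ha)

lemma card_filter_sq_eq (hF : ringChar F ≠ 2) (t : F) :
    (#{x : F | x ^ 2 = t} : ℂ) = η t + 1 := by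
  have h := quadraticChar_card_sqrts hF t
  rw [Set.toFinset_ofPred] at h
  rw [complexQuadraticChar_apply]
  exact_mod_cast h

lemma sum_addChar_mul_sq (hF : ringChar F ≠ 2) {ψ : AddChar F ℂ} (hψ : ψ.IsPrimitive) {a : F}
    (ha : a ≠ 0) : ∑ x, ψ (a * x ^ 2) = η a * gaussSum η ψ := by
  calc ∑ x, ψ (a * x ^ 2)
      = ∑ t, (#{x : F | x ^ 2 = t} : ℂ) * ψ (a * t) := by
        rw [← sum_fiberwise' univ (fun x : F ↦ x ^ 2) (fun t ↦ ψ (a * t))]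
        simp only [sum_const, nsmul_eq_mul]
    _ = ∑ t, η t * ψ (a * t) + ∑ t, ψ (t * a) := by
        simp only [card_filter_sq_eq hF, add_mul, one_mul, sum_add_distrib, mul_comm a]
    _ = η a * gaussSum η ψ := by
        rw [sum_complexQuadraticChar_mul_addChar hF, AddChar.sum_mulShift a hψ, if_neg ha,
          Nat.cast_zero, add_zero]

lemma sum_addChar_mul_sq_eq_ite (hF : ringChar F ≠ 2) {ψ : AddChar F ℂ} (hψ : ψ.IsPrimitive)
    (a : F) :
    ∑ z, ψ (a * z ^ 2) = (if a = 0 then (Fintype.card F : ℂ) else 0) + η a * gaussSum η ψ := by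
  split_ifs with ha
  · simp [ha, complexQuadraticChar_zero]
  · rw [sum_addChar_mul_sq hF hψ ha, zero_add]

end GaussSums

section BilinearForms

open LinearMap (BilinForm)

variable {F V : Type*} [Field F] [AddCommGroup V] [Module F V]

lemma apply_self_eq_sum_of_iIsOrtho {ι : Type*} [Fintype ι] {B : BilinForm F V}
    (v : Module.Basis ι F V) (hv : B.iIsOrtho v) (x : V) :
    B x x = ∑ i, B (v i) (v i) * v.equivFun x i ^ 2 := by
  conv_lhs => rw [← v.sum_equivFun x]
  simp only [map_sum, LinearMap.sum_apply, map_smul, LinearMap.smul_apply, smul_eq_mul]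
  refine sum_congr rfl fun i _ ↦ ?_
  rw [sum_eq_single i (fun j _ hji ↦ by rw [hv hji]; ring) (by simp)]
  ring

/-- The discriminant of a bilinear form: its Gram determinant in an arbitrarily chosen basis. Only
its class modulo nonzero squares is intrinsic. -/
def formDiscr [FiniteDimensional F V] (B : BilinForm F V) : F :=
  (LinearMap.BilinForm.toMatrix (Module.finBasis F V) B).det

lemma formDiscr_ne_zero [FiniteDimensional F V] {B : BilinForm F V} (hB : B.Nondegenerate) :
    formDiscr B ≠ 0 :=
  (LinearMap.BilinForm.nondegenerate_iff_det_ne_zero _).1 hB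

lemma exists_prod_eq_sq_mul_formDiscr [FiniteDimensional F V] {B : BilinForm F V}
    (v : Module.Basis (Fin (Module.finrank F V)) F V) (hv : B.iIsOrtho v) :
    ∃ d ≠ 0, ∏ i, B (v i) (v i) = d ^ 2 * formDiscr B := by
  let b := Module.finBasis F V
  have hdiag : LinearMap.BilinForm.toMatrix v B = Matrix.diagonal fun i ↦ B (v i) (v i) := by
    ext i j
    obtain rfl | hij := eq_or_ne i j
    · simp
    · simpa [hij] using hv hij
  have hdet := congrArg Matrix.det (LinearMap.BilinForm.toMatrix_mul_basis_toMatrix b v B)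
  rw [hdiag, Matrix.det_diagonal, Matrix.det_mul, Matrix.det_mul, Matrix.det_transpose] at hdet
  refine ⟨(b.toMatrix v).det, (b.isUnit_det v).ne_zero, ?_⟩
  rw [← hdet, formDiscr]
  ring

/-- The sign attached to the hyperplane `b^⊥` by a form of odd dimension: the quadratic character of
the discriminant of the restriction of `B` to `b^⊥`, normalised so that it is `1` exactly when this
restriction is hyperbolic and `-1` when it is elliptic; it is `0` when `b` is isotropic. -/
def quadricSign [Fintype F] [FiniteDimensional F V] (B : BilinForm F V) (b : V) : ℤ :=
  quadraticChar F ((-1) ^ (Module.finrank F V / 2) * formDiscr B * B b b)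

lemma quadricSign_zero_right [Fintype F] [FiniteDimensional F V] (B : BilinForm F V) :
    quadricSign B 0 = 0 := by
  simp [quadricSign]

lemma quadricSign_eq_zero_iff [Fintype F] [FiniteDimensional F V] {B : BilinForm F V}
    (hB : B.Nondegenerate) (b : V) : quadricSign B b = 0 ↔ B b b = 0 := by
  rw [quadricSign, quadraticChar_eq_zero_iff]
  simp [formDiscr_ne_zero hB]

lemma quadricSign_trichotomy [Fintype F] [FiniteDimensional F V] (B : BilinForm F V) (b : V) :
    quadricSign B b = 0 ∨ quadricSign B b = 1 ∨ quadricSign B b = -1 :=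
  quadraticChar_isQuadratic F _

lemma complexQuadraticChar_mul_gaussSum_pow [Fintype F] [FiniteDimensional F V]
    (hF : ringChar F ≠ 2) (B : BilinForm F V) {k : ℕ} (hn : Module.finrank F V = 2 * k + 1)
    {ψ : AddChar F ℂ} (hψ : ψ.IsPrimitive) (b : V) :
    η (-B b b * formDiscr B) * gaussSum η ψ ^ (Module.finrank F V + 1) =
      quadricSign B b * Fintype.card F ^ (k + 1) := by
  have hexp : Module.finrank F V + 1 = 2 * (k + 1) := by lia
  have hdiv : Module.finrank F V / 2 = k := by lia
  rw [hexp, gaussSum_complexQuadraticChar_pow_two_mul hF hψ, ← mul_assoc, ← map_mul, quadricSign,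
    hdiv, ← complexQuadraticChar_apply]
  congr 2
  ring

variable [Fintype V]

lemma sum_addChar_linearMap {ψ : AddChar F ℂ} (hψ : ψ.IsPrimitive) (f : V →ₗ[F] F) :
    ∑ x, ψ (f x) = if f = 0 then (Fintype.card V : ℂ) else 0 := by
  split_ifs with hf
  · simp [hf]
  · refine AddChar.sum_eq_zero_of_ne_one
      (ψ := ψ.compAddMonoidHom f.toAddMonoidHom) fun h ↦ hψ (one_ne_zero) ?_
    ext a
    obtain ⟨x, rfl⟩ := LinearMap.surjective hf a
    simpa using DFunLike.congr_fun h x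

lemma sum_addChar_mul_apply_self_add (hF : ringChar F ≠ 2) {B : BilinForm F V} (hs : B.IsSymm)
    (ψ : AddChar F ℂ) (b : V) {y : F} (hy : y ≠ 0) (z : F) :
    ∑ x, ψ (y * B x x + z * B b x) =
      ψ (-B b b * y * (2 * y)⁻¹ ^ 2 * z ^ 2) * ∑ x, ψ (y * B x x) := by
  rw [mul_sum]
  refine Fintype.sum_equiv (Equiv.addRight ((z * (2 * y)⁻¹) • b)) _ _ fun x ↦ ?_
  have h2 : (2 : F) ≠ 0 := Ring.two_ne_zero hF
  rw [← AddChar.map_add_eq_mul, Equiv.coe_addRight]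
  congr 1
  simp only [map_add, map_smul, LinearMap.add_apply, LinearMap.smul_apply, smul_eq_mul, hs.eq x b]
  field_simp
  ring

lemma card_isotropic_filter_apply_eq_one (B : BilinForm F V) (b : V) {t : F} (ht : t ≠ 0) :
    #{x | B x x = 0 ∧ B b x = t} = #{x | B x x = 0 ∧ B b x = 1} := by
  refine (card_equiv (MulAction.toPerm (Units.mk0 t ht)) fun x ↦ ?_).symm
  simp [Units.smul_def, ht]

variable [Fintype F]

lemma sum_addChar_mul_apply_self_of_iIsOrtho {ι : Type*} [Fintype ι] (hF : ringChar F ≠ 2)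
    {B : BilinForm F V} (hB : B.Nondegenerate) (v : Module.Basis ι F V) (hv : B.iIsOrtho v)
    {ψ : AddChar F ℂ} (hψ : ψ.IsPrimitive) {a : F} (ha : a ≠ 0) :
    ∑ x, ψ (a * B x x) =
      η (∏ i, B (v i) (v i)) * (η a * gaussSum η ψ) ^ Fintype.card ι := by
  calc ∑ x, ψ (a * B x x)
      = ∑ c : ι → F, ∏ i, ψ (a * B (v i) (v i) * c i ^ 2) := by
        refine Fintype.sum_equiv v.equivFun.toEquiv _ _ fun x ↦ ?_
        rw [apply_self_eq_sum_of_iIsOrtho v hv, mul_sum]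
        simp only [← mul_assoc]
        exact map_prod ψ.toMonoidHom
          (fun i ↦ .ofAdd (a * B (v i) (v i) * v.equivFun x i ^ 2)) univ
    _ = ∏ i, ∑ t, ψ (a * B (v i) (v i) * t ^ 2) := by
        rw [prod_univ_sum, Fintype.piFinset_univ]
    _ = ∏ i, η (B (v i) (v i)) * (η a * gaussSum η ψ) := by
        refine prod_congr rfl fun i _ ↦ ?_
        rw [sum_addChar_mul_sq hF hψ
          (mul_ne_zero ha (hv.not_isOrtho_basis_self_of_nondegenerate hB i)), map_mul]
        ring
    _ = _ := by rw [prod_mul_distrib, prod_const, map_prod, card_univ]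

lemma sum_addChar_mul_apply_self (hF : ringChar F ≠ 2) {B : BilinForm F V} (hB : B.Nondegenerate)
    (hs : B.IsSymm) {ψ : AddChar F ℂ} (hψ : ψ.IsPrimitive) {a : F} (ha : a ≠ 0) :
    ∑ x, ψ (a * B x x) =
      η (formDiscr B) * (η a * gaussSum η ψ) ^ Module.finrank F V := by
  have := invertibleOfNonzero (Ring.two_ne_zero hF)
  obtain ⟨v, hv⟩ := LinearMap.BilinForm.exists_orthogonal_basis
    (LinearMap.BilinForm.isSymm_iff.1 hs)
  obtain ⟨d, hd, hprod⟩ := exists_prod_eq_sq_mul_formDiscr v hv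
  rw [sum_addChar_mul_apply_self_of_iIsOrtho hF hB v hv hψ ha, hprod, map_mul, sq d, map_mul,
    complexQuadraticChar_mul_self hd, one_mul, Fintype.card_fin]

lemma sum_addChar_mul_apply_self_of_odd (hF : ringChar F ≠ 2) {B : BilinForm F V}
    (hB : B.Nondegenerate) (hs : B.IsSymm) {ψ : AddChar F ℂ} (hψ : ψ.IsPrimitive)
    (hn : Odd (Module.finrank F V)) {a : F} (ha : a ≠ 0) :
    ∑ x, ψ (a * B x x) = η a * (η (formDiscr B) * gaussSum η ψ ^ Module.finrank F V) := by
  have hpow : η a ^ Module.finrank F V = η a := by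
    obtain ⟨k, hk⟩ := hn
    rw [hk, pow_succ, pow_mul, sq, complexQuadraticChar_mul_self ha, one_pow, one_mul]
  rw [sum_addChar_mul_apply_self hF hB hs hψ ha, mul_pow, hpow]
  ring

lemma card_mul_card_isotropic (hF : ringChar F ≠ 2) {B : BilinForm F V}
    (hB : B.Nondegenerate) (hs : B.IsSymm) (hn : Odd (Module.finrank F V)) :
    Fintype.card F * #{x | B x x = 0} = Fintype.card V := by
  let ψ := AddChar.FiniteField.primitiveChar_to_Complex F
  have hψ : ψ.IsPrimitive := AddChar.FiniteField.primitiveChar_to_Complex_isPrimitive F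
  have key : Fintype.card F * (#{x | B x x = 0} : ℂ) = Fintype.card V := by
    calc Fintype.card F * (#{x | B x x = 0} : ℂ)
      _ = ∑ x, ∑ y, ψ (y * B x x) := by
        simp only [AddChar.sum_mulShift _ hψ, Nat.cast_ite, Nat.cast_zero, ← sum_filter, sum_const,
          nsmul_eq_mul, mul_comm]
      _ = ∑ x, ψ (0 * B x x) + ∑ y ∈ univ.erase (0 : F), ∑ x, ψ (y * B x x) := by
        rw [sum_comm]
        exact (add_sum_erase univ (fun y : F ↦ ∑ x, ψ (y * B x x)) (mem_univ 0)).symm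
      _ = Fintype.card V + (∑ y ∈ univ.erase (0 : F), η y) *
          (η (formDiscr B) * gaussSum η ψ ^ Module.finrank F V) := by
        rw [sum_mul]
        congr 1
        · simp only [zero_mul, AddChar.map_zero_eq_one, sum_const, card_univ, nsmul_eq_mul,
            mul_one]
        · exact sum_congr rfl fun y hy ↦
            sum_addChar_mul_apply_self_of_odd hF hB hs hψ hn (ne_of_mem_erase hy)
      _ = Fintype.card V := by
        rw [sum_erase _ complexQuadraticChar_zero, sum_complexQuadraticChar hF, zero_mul, add_zero]
  exact_mod_cast key

lemma sum_sum_addChar_mul_apply_self_add (hF : ringChar F ≠ 2) {B : BilinForm F V}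
    (hB : B.Nondegenerate) (hs : B.IsSymm) (hn : Odd (Module.finrank F V)) {ψ : AddChar F ℂ}
    (hψ : ψ.IsPrimitive) (b : V) {y : F} (hy : y ≠ 0) :
    ∑ z, ∑ x, ψ (y * B x x + z * B b x) =
      η y * (if B b b = 0 then (Fintype.card F : ℂ) else 0) *
          (η (formDiscr B) * gaussSum η ψ ^ Module.finrank F V) +
        η (-B b b * formDiscr B) * gaussSum η ψ ^ (Module.finrank F V + 1) := by
  have hc : (2 * y)⁻¹ ≠ 0 := inv_ne_zero (mul_ne_zero (Ring.two_ne_zero hF) hy)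
  have hη : η (-B b b * y * (2 * y)⁻¹ ^ 2) = η (-B b b) * η y := by
    rw [map_mul, map_mul, sq, map_mul, complexQuadraticChar_mul_self hc, mul_one]
  have hzero : -B b b * y * (2 * y)⁻¹ ^ 2 = 0 ↔ B b b = 0 := by
    simp [hy, Ring.two_ne_zero hF]
  simp only [sum_addChar_mul_apply_self_add hF hs ψ b hy, ← sum_mul,
    sum_addChar_mul_apply_self_of_odd hF hB hs hψ hn hy, sum_addChar_mul_sq_eq_ite hF hψ, hη,
    hzero, map_mul]
  linear_combination η (-B b b) * η (formDiscr B) * gaussSum η ψ ^ (Module.finrank F V + 1) *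
    complexQuadraticChar_mul_self hy

lemma sum_sum_addChar_linearMap {ψ : AddChar F ℂ} (hψ : ψ.IsPrimitive) {f : V →ₗ[F] F}
    (hf : f ≠ 0) : ∑ z, ∑ x, ψ (z * f x) = Fintype.card V := by
  have hz (z : F) : ∑ x, ψ (z * f x) = if z = 0 then (Fintype.card V : ℂ) else 0 := by
    simpa [hf] using sum_addChar_linearMap hψ (z • f)
  simp only [hz, sum_ite_eq', mem_univ, if_true]

lemma card_sq_mul_card_isotropic_orthogonal (hF : ringChar F ≠ 2) {B : BilinForm F V}
    (hB : B.Nondegenerate) (hs : B.IsSymm) (hn : Odd (Module.finrank F V)) {ψ : AddChar F ℂ}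
    (hψ : ψ.IsPrimitive) {b : V} (hb : b ≠ 0) :
    (Fintype.card F : ℂ) ^ 2 * #{x | B x x = 0 ∧ B b x = 0} =
      Fintype.card V + (Fintype.card F - 1) *
        (η (-B b b * formDiscr B) * gaussSum η ψ ^ (Module.finrank F V + 1)) := by
  have hBb : B b ≠ 0 := fun h ↦ hb (hB.1 b fun x ↦ by rw [h, LinearMap.zero_apply])
  have hcard : (#(univ.erase (0 : F)) : ℂ) = Fintype.card F - 1 := by
    rw [card_erase_of_mem (mem_univ _), card_univ, Nat.cast_sub Fintype.card_pos, Nat.cast_one]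
  calc (Fintype.card F : ℂ) ^ 2 * #{x | B x x = 0 ∧ B b x = 0}
      = ∑ x, (∑ y, ψ (y * B x x)) * ∑ z, ψ (z * B b x) := by
        simp only [AddChar.sum_mulShift _ hψ, Nat.cast_ite, Nat.cast_zero, ite_zero_mul_ite_zero,
          ← sum_filter, sum_const, nsmul_eq_mul]
        ring
    _ = ∑ y, ∑ z, ∑ x, ψ (y * B x x + z * B b x) := by
        simp only [sum_mul_sum, AddChar.map_add_eq_mul]
        rw [sum_comm]
        exact sum_congr rfl fun y _ ↦ sum_comm
    _ = Fintype.card V + ∑ y ∈ univ.erase (0 : F), ∑ z, ∑ x, ψ (y * B x x + z * B b x) := by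
        rw [← add_sum_erase _ _ (mem_univ (0 : F))]
        simp only [zero_mul, zero_add, sum_sum_addChar_linearMap hψ hBb]
    _ = _ := by
        rw [sum_congr rfl fun y hy ↦ sum_sum_addChar_mul_apply_self_add hF hB hs hn hψ b
          (ne_of_mem_erase hy)]
        rw [sum_add_distrib, ← sum_mul, ← sum_mul, sum_erase _ complexQuadraticChar_zero,
          sum_complexQuadraticChar hF, zero_mul, zero_mul, zero_add, sum_const, nsmul_eq_mul, hcard]

lemma card_mul_card_isotropic_orthogonal (hF : ringChar F ≠ 2) {B : BilinForm F V}
    (hB : B.Nondegenerate) (hs : B.IsSymm) {k : ℕ} (hn : Module.finrank F V = 2 * k + 1) {b : V}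
    (hb : b ≠ 0) :
    (Fintype.card F * #{x | B x x = 0 ∧ B b x = 0} : ℤ) =
      Fintype.card F ^ (2 * k) + quadricSign B b * (Fintype.card F - 1) * Fintype.card F ^ k := by
  have hψ := AddChar.FiniteField.primitiveChar_to_Complex_isPrimitive F
  have h := card_sq_mul_card_isotropic_orthogonal hF hB hs ⟨k, hn⟩ hψ hb
  rw [complexQuadraticChar_mul_gaussSum_pow hF B hn hψ,
    Module.card_eq_pow_finrank (K := F) (V := V), hn] at h
  have hq : (Fintype.card F : ℂ) ≠ 0 := Nat.cast_ne_zero.2 Fintype.card_ne_zero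
  have key : (Fintype.card F * #{x | B x x = 0 ∧ B b x = 0} : ℂ) =
      Fintype.card F ^ (2 * k) + quadricSign B b * (Fintype.card F - 1) * Fintype.card F ^ k := by
    refine mul_left_cancel₀ hq ?_
    push_cast at h
    linear_combination h
  exact_mod_cast key

lemma card_mul_card_isotropic_apply_eq (hF : ringChar F ≠ 2) {B : BilinForm F V}
    (hB : B.Nondegenerate) (hs : B.IsSymm) {k : ℕ} (hn : Module.finrank F V = 2 * k + 1) {b : V}
    (hb : b ≠ 0) {t : F} (ht : t ≠ 0) :
    (Fintype.card F * #{x | B x x = 0 ∧ B b x = t} : ℤ) =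
      Fintype.card F ^ (2 * k) - quadricSign B b * Fintype.card F ^ k := by
  have htotal : #{x | B x x = 0 ∧ B b x = 0} +
      (Fintype.card F - 1) * #{x | B x x = 0 ∧ B b x = t} = #{x | B x x = 0} := by
    rw [card_eq_sum_card_fiberwise (s := {x | B x x = 0}) (f := B b) (t := univ) (by simp),
      ← add_sum_erase _ _ (mem_univ (0 : F)), ← card_univ, ← card_erase_of_mem (mem_univ (0 : F))]
    simp only [filter_filter]
    rw [sum_congr rfl fun s hs ↦ (card_isotropic_filter_apply_eq_one B b (ne_of_mem_erase hs)).trans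
      (card_isotropic_filter_apply_eq_one B b ht).symm, sum_const, smul_eq_mul]
  have hD := card_mul_card_isotropic hF hB hs ⟨k, hn⟩
  have hN := card_mul_card_isotropic_orthogonal hF hB hs hn hb
  rw [Module.card_eq_pow_finrank (K := F) (V := V), hn, ← htotal] at hD
  zify [Fintype.card_pos (α := F)] at hD
  have hq : (Fintype.card F - 1 : ℤ) ≠ 0 :=
    sub_ne_zero.2 (mod_cast (Fintype.one_lt_card (α := F)).ne')
  refine mul_left_cancel₀ hq ?_
  linear_combination hD - hN

lemma gaussSum_mul_sum_complexQuadraticChar_apply_self (hF : ringChar F ≠ 2) {B : BilinForm F V}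
    (hB : B.Nondegenerate) (hs : B.IsSymm) (hn : Odd (Module.finrank F V)) {ψ : AddChar F ℂ}
    (hψ : ψ.IsPrimitive) :
    gaussSum η ψ * ∑ b, η (B b b) =
      (Fintype.card F - 1) * (η (formDiscr B) * gaussSum η ψ ^ Module.finrank F V) := by
  calc gaussSum η ψ * ∑ b, η (B b b)
      = ∑ b, ∑ y, η y * ψ (y * B b b) := by
        simp only [mul_sum, mul_comm _ (B _ _), sum_complexQuadraticChar_mul_addChar hF]
        exact sum_congr rfl fun b _ ↦ mul_comm _ _
    _ = ∑ y ∈ univ.erase (0 : F), η y * ∑ b, ψ (y * B b b) := by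
        rw [sum_comm, sum_erase _ (by rw [complexQuadraticChar_zero, zero_mul])]
        simp only [mul_sum]
    _ = ∑ _y ∈ univ.erase (0 : F), η (formDiscr B) * gaussSum η ψ ^ Module.finrank F V := by
        refine sum_congr rfl fun y hy ↦ ?_
        have hy := ne_of_mem_erase hy
        rw [sum_addChar_mul_apply_self_of_odd hF hB hs hψ hn hy, ← mul_assoc,
          complexQuadraticChar_mul_self hy, one_mul]
    _ = _ := by rw [sum_const, nsmul_eq_mul, cast_card_erase_of_mem (mem_univ _), card_univ]

lemma sum_quadricSign (hF : ringChar F ≠ 2) {B : BilinForm F V} (hB : B.Nondegenerate)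
    (hs : B.IsSymm) {k : ℕ} (hn : Module.finrank F V = 2 * k + 1) :
    ∑ b, quadricSign B b = (Fintype.card F - 1) * Fintype.card F ^ k := by
  have hψ := AddChar.FiniteField.primitiveChar_to_Complex_isPrimitive F
  have hsum := gaussSum_mul_sum_complexQuadraticChar_apply_self hF hB hs ⟨k, hn⟩ hψ
  rw [hn, pow_succ, gaussSum_complexQuadraticChar_pow_two_mul hF hψ] at hsum
  have hcancel := mul_left_cancel₀ (gaussSum_complexQuadraticChar_ne_zero hF hψ)
    (hsum.trans (by ring : _ = gaussSum η _ * ((Fintype.card F - 1) * (η (formDiscr B) *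
      (η ((-1 : F) ^ k) * Fintype.card F ^ k)))))
  have hdiv : Module.finrank F V / 2 = k := by lia
  have hsign (b : V) :
      (quadricSign B b : ℂ) = η ((-1 : F) ^ k * formDiscr B) * η (B b b) := by
    rw [quadricSign, hdiv, ← complexQuadraticChar_apply, map_mul]
  have key : ∑ b, (quadricSign B b : ℂ) = (Fintype.card F - 1) * Fintype.card F ^ k := by
    simp only [hsign, ← mul_sum, hcancel, map_mul]
    linear_combination (Fintype.card F - 1 : ℂ) * Fintype.card F ^ k *
      (η (formDiscr B) * η (formDiscr B) * complexQuadraticChar_mul_self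
        (pow_ne_zero k (neg_ne_zero.2 one_ne_zero) : (-1 : F) ^ k ≠ 0) +
      complexQuadraticChar_mul_self (formDiscr_ne_zero hB))
  exact_mod_cast key

lemma card_quadricSign_eq_zero (hF : ringChar F ≠ 2) {B : BilinForm F V} (hB : B.Nondegenerate)
    (hs : B.IsSymm) {k : ℕ} (hn : Module.finrank F V = 2 * k + 1) :
    #{b | quadricSign B b = 0} = Fintype.card F ^ (2 * k) := by
  refine Nat.eq_of_mul_eq_mul_left (Fintype.card_pos (α := F)) ?_
  simp only [quadricSign_eq_zero_iff hB]
  rw [card_mul_card_isotropic hF hB hs ⟨k, hn⟩, Module.card_eq_pow_finrank (K := F) (V := V), hn,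
    pow_succ']

lemma sum_quadricSign_sq (hF : ringChar F ≠ 2) {B : BilinForm F V} (hB : B.Nondegenerate)
    (hs : B.IsSymm) {k : ℕ} (hn : Module.finrank F V = 2 * k + 1) :
    ∑ b, quadricSign B b ^ 2 = (Fintype.card F - 1) * Fintype.card F ^ (2 * k) := by
  have hsq (b : V) : quadricSign B b ^ 2 = 1 - if quadricSign B b = 0 then 1 else 0 := by
    rcases quadricSign_trichotomy B b with h | h | h <;> simp [h]
  simp only [hsq, sum_sub_distrib, sum_const, sum_boole, card_quadricSign_eq_zero hF hB hs hn,
    card_univ, Module.card_eq_pow_finrank (K := F) (V := V), hn]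
  push_cast
  ring

lemma two_mul_card_quadricSign_eq (hF : ringChar F ≠ 2) {B : BilinForm F V} (hB : B.Nondegenerate)
    (hs : B.IsSymm) {k : ℕ} (hn : Module.finrank F V = 2 * k + 1) {ε : ℤ} (hε : ε = 1 ∨ ε = -1) :
    (2 * #{b | quadricSign B b = ε} : ℤ) =
      (Fintype.card F - 1) * (Fintype.card F ^ (2 * k) + ε * Fintype.card F ^ k) := by
  have hind (b : V) : 2 * (if quadricSign B b = ε then 1 else 0) =
      quadricSign B b ^ 2 + ε * quadricSign B b := by
    rcases hε with rfl | rfl <;> rcases quadricSign_trichotomy B b with h | h | h <;> simp [h]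
  calc (2 * #{b | quadricSign B b = ε} : ℤ)
      = ∑ b, (quadricSign B b ^ 2 + ε * quadricSign B b) := by
        rw [natCast_card_filter, mul_sum]
        exact sum_congr rfl fun b _ ↦ hind b
    _ = _ := by
        rw [sum_add_distrib, ← mul_sum, sum_quadricSign_sq hF hB hs hn,
          sum_quadricSign hF hB hs hn]
        ring

end BilinearForms

section SumsByValue

lemma sum_comp_eq_nsmul_of_trichotomy {α M : Type*} [AddCommMonoid M] (s : Finset α) {f : α → ℤ}
    {ε : ℤ} (hε : ε = 1 ∨ ε = -1) (hf : ∀ a, f a = 0 ∨ f a = 1 ∨ f a = -1) (g : ℤ → M) :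
    ∑ a ∈ s, g (f a) =
      #{a ∈ s | f a = 0} • g 0 + #{a ∈ s | f a = ε} • g ε + #{a ∈ s | f a = -ε} • g (-ε) := by
  have hmaps (a : α) (_ : a ∈ s) : f a ∈ ({0, ε, -ε} : Finset ℤ) := by
    rcases hε with rfl | rfl <;> rcases hf a with h | h | h <;> simp [h]
  rw [← sum_fiberwise_of_maps_to' hmaps g, sum_insert, sum_pair, add_assoc]
  · simp only [sum_const]
  · rcases hε with rfl | rfl <;> decide
  · rcases hε with rfl | rfl <;> decide

lemma sum_eq_add_nsmul_of_ne_zero {α M : Type*} [Fintype α] [Zero α] [AddCommMonoid M]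
    {f : α → M} {v : M} (hf : ∀ a ≠ 0, f a = v) : ∑ a, f a = f 0 + (Fintype.card α - 1) • v := by
  rw [← add_sum_erase _ _ (mem_univ (0 : α)), sum_congr rfl fun a ha ↦ hf a (ne_of_mem_erase ha),
    sum_const, card_erase_of_mem (mem_univ _), card_univ]

lemma val_map_eq_sum_singleton {α β : Type*} (s : Finset α) (f : α → β) :
    s.val.map f = ∑ a ∈ s, {f a} := by
  rw [← Multiset.sum_map_singleton (s.val.map f), Multiset.map_map]
  rfl

end SumsByValue

section Codes

lemma natCard_dualCode {ι F : Type*} [Fintype ι] [Field F] [Fintype F]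
    (W : Submodule F (ι → F)) :
    Nat.card (dualCode (W : Set (ι → F))) =
      Fintype.card F ^ (Fintype.card ι - Module.finrank F W) := by
  let B : LinearMap.BilinForm F (ι → F) := dotProductBilin F F
  have hdot (u : ι → F) (hu : ∀ w, u ⬝ᵥ w = 0) : u = 0 := dotProduct_eq_zero_iff.1 hu
  have hB : B.Nondegenerate :=
    ⟨fun u hu ↦ hdot u hu, fun u hu ↦ hdot u fun w ↦ (dotProduct_comm u w).trans (hu w)⟩
  have hset : dualCode (W : Set (ι → F)) = (B.orthogonal W : Set (ι → F)) := by
    ext u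
    exact forall₂_congr fun v _ ↦ by
      rw [← dotProduct, dotProduct_comm]
      rfl
  rw [hset, ← Module.finrank_pi (ι := ι) F, ← LinearMap.BilinForm.finrank_orthogonal hB W,
    ← Nat.card_eq_fintype_card]
  exact Module.natCard_eq_pow_finrank (K := F) (V := B.orthogonal W)

lemma subset_dualCode_of_sum_sq_eq_zero {ι R : Type*} [Fintype ι] [CommRing R] [NoZeroDivisors R]
    (h2 : (2 : R) ≠ 0) {W : Submodule R (ι → R)} (hW : ∀ w ∈ W, ∑ i, w i ^ 2 = 0) :
    (W : Set (ι → R)) ⊆ dualCode W := by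
  intro u hu v hv
  refine (mul_eq_zero.1 ?_).resolve_left h2
  calc 2 * ∑ i, u i * v i
      = ∑ i, (u + v) i ^ 2 - ∑ i, u i ^ 2 - ∑ i, v i ^ 2 := by
        rw [mul_sum, ← sum_sub_distrib, ← sum_sub_distrib]
        refine sum_congr rfl fun i _ ↦ ?_
        rw [Pi.add_apply]
        ring
    _ = 0 := by rw [hW _ (W.add_mem hu hv), hW u hu, hW v hv, sub_zero, sub_zero]

lemma three_le_hammingNorm_of_mem_dualCode {ι R : Type*} [Fintype ι] [CommRing R]
    [NoZeroDivisors R] {C : Set (ι → R)} (hone : 1 ∈ C) (hsep : ∀ i j, i ≠ j → ∃ v ∈ C, v i ≠ v j)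
    {u : ι → R} (hu : u ∈ dualCode C) (hu0 : u ≠ 0) : 3 ≤ hammingNorm u := by
  by_contra! hlt
  have hsupp (v : ι → R) (hv : v ∈ C) : ∑ i with u i ≠ 0, u i * v i = 0 := by
    rw [sum_filter_of_ne fun i _ h ↦ left_ne_zero_of_mul h]
    exact hu v hv
  have hne {i : ι} (hi : i ∈ ({i | u i ≠ 0} : Finset ι)) : u i ≠ 0 := (mem_filter.1 hi).2
  have hpos : 0 < hammingNorm u := hammingNorm_pos_iff.2 hu0
  rw [hammingNorm] at hlt hpos
  obtain h1 | h2 : #{i | u i ≠ 0} = 1 ∨ #{i | u i ≠ 0} = 2 := by lia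
  · obtain ⟨i, hi⟩ := card_eq_one.1 h1
    exact hne (i := i) (by simp [hi]) (by simpa [hi] using hsupp 1 hone)
  · obtain ⟨i, j, hij, hS⟩ := card_eq_two.1 h2
    obtain ⟨v, hv, hvij⟩ := hsep i j hij
    have hsum : u i + u j = 0 := by simpa [hS, sum_pair hij] using hsupp 1 hone
    have hsumv : u i * v i + u j * v j = 0 := by simpa [hS, sum_pair hij] using hsupp v hv
    refine mul_ne_zero (hne (by simp [hS]) : u i ≠ 0) (sub_ne_zero.2 hvij) ?_
    linear_combination hsumv - v j * hsum

lemma isMinDist_dualCode_three {ι R : Type*} [Fintype ι] [CommRing R] [NoZeroDivisors R]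
    (h2 : (2 : R) ≠ 0) {C : Set (ι → R)} (hone : 1 ∈ C)
    (hsep : ∀ i j, i ≠ j → ∃ v ∈ C, v i ≠ v j) {i j k : ι} (hij : i ≠ j) (hik : i ≠ k)
    (hjk : j ≠ k) (hmid : ∀ v ∈ C, v i + v j = 2 * v k) : IsMinDist (dualCode C) 3 := by
  have : Nontrivial R := ⟨⟨2, 0, h2⟩⟩
  let w : ι → R := Pi.single i 1 + Pi.single j 1 - Pi.single k 2
  have hw : ({s | w s ≠ 0} : Finset ι) = {i, j, k} := by
    ext s
    by_cases hi : s = i <;> by_cases hj : s = j <;> by_cases hk : s = k <;>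
      simp_all [w, Pi.single_apply]
  have hnorm : hammingNorm w = 3 := by
    rw [hammingNorm, hw, card_eq_three.2 ⟨i, j, k, hij, hik, hjk, rfl⟩]
  refine ⟨⟨w, fun v hv ↦ ?_, hammingNorm_ne_zero_iff.1 (by lia), hnorm⟩,
    fun u hu hu0 ↦ three_le_hammingNorm_of_mem_dualCode hone hsep hu hu0⟩
  change w ⬝ᵥ v = 0
  simp [w, add_dotProduct, sub_dotProduct, hmid v hv]

variable {F K : Type*} [Field F] [Field K] [Algebra F K]

/-- The linear encoder of the augmented code: it sends a message `(b, c)` to the codeword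
`(Tr (b d) + c)_{d ∈ D}`. -/
def augEncode (F K : Type*) [Field F] [Field K] [Algebra F K] (P : K → Prop) :
    K × F →ₗ[F] ({x : K // P x} → F) where
  toFun z d := Algebra.trace F K (z.1 * d.1) + z.2
  map_add' z w := by
    ext d
    simp only [Prod.fst_add, Prod.snd_add, add_mul, map_add, Pi.add_apply]
    ring
  map_smul' a z := by
    ext d
    simp [mul_add]

lemma augEncode_apply (P : K → Prop) (b : K) (c : F) (d : {x : K // P x}) :
    augEncode F K P (b, c) d = Algebra.trace F K (b * d.1) + c :=
  rfl

lemma coe_range_augEncode (P : K → Prop) :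
    (LinearMap.range (augEncode F K P) : Set ({x : K // P x} → F)) = augCode F K P := by
  ext w
  simp [augCode, augEncode_apply, funext_iff, eq_comm]

lemma isMinDist_dualCode_augCode_three [FiniteDimensional F K] [Algebra.IsSeparable F K]
    (h2 : (2 : F) ≠ 0) {P : K → Prop} (hP : P 0) {x : K} (hx0 : x ≠ 0) (hx : P x)
    (hneg : P (-x)) [Fintype {x // P x}] : IsMinDist (dualCode (augCode F K P)) 3 := by
  have h2K : (2 : K) ≠ 0 := by
    rw [← map_ofNat (algebraMap F K) 2]
    exact (map_ne_zero _).2 h2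
  have hxneg : x ≠ -x := fun h ↦ mul_ne_zero h2K hx0 (by linear_combination h)
  refine isMinDist_dualCode_three h2 ⟨0, 1, fun d ↦ by simp⟩ (fun d d' hdd' ↦ ?_)
    (i := ⟨x, hx⟩) (j := ⟨-x, hneg⟩) (k := ⟨0, hP⟩) (by simpa using hxneg) (by simpa using hx0)
    (by simpa using hx0) ?_
  · obtain ⟨z, hz⟩ := Algebra.trace_surjective F K 1
    have hsub : d.1 - d'.1 ≠ 0 := sub_ne_zero.2 (Subtype.coe_injective.ne hdd')
    refine ⟨augEncode F K P (z * (d.1 - d'.1)⁻¹, 0), ⟨_, 0, fun _ ↦ rfl⟩, sub_ne_zero.1 ?_⟩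
    rw [augEncode_apply, augEncode_apply, add_zero, add_zero, ← map_sub, ← mul_sub, mul_assoc,
      inv_mul_cancel₀ hsub, mul_one, hz]
    exact one_ne_zero
  · rintro v ⟨b, c, hv⟩
    simp only [hv, mul_neg, map_neg, mul_zero, map_zero]
    ring

variable [Fintype K]

lemma card_augEncode_eq (P : K → Prop) (b : K) (c t : F) :
    #{d | augEncode F K P (b, c) d = t} = #{x | P x ∧ Algebra.trace F K (b * x) = t - c} := by
  refine card_bij (fun d _ ↦ d.1) (fun d hd ↦ ?_) (fun _ _ _ _ ↦ Subtype.ext) fun x hx ↦ ?_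
  · rw [mem_filter] at hd ⊢
    exact ⟨mem_univ _, d.2, eq_sub_of_add_eq hd.2⟩
  · obtain ⟨hP, ht⟩ := (mem_filter.1 hx).2
    exact ⟨⟨x, hP⟩, mem_filter.2 ⟨mem_univ _, add_eq_of_eq_sub ht⟩, rfl⟩

lemma hammingNorm_augEncode_add_card (P : K → Prop) (b : K) (c : F) :
    hammingNorm (augEncode F K P (b, c)) + #{x | P x ∧ Algebra.trace F K (b * x) = -c} =
      Fintype.card {x // P x} := by
  rw [hammingNorm, ← zero_sub, ← card_augEncode_eq, add_comm, card_filter_add_card_filter_not,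
    card_univ]

lemma hammingNorm_augEncode_zero_left (P : K → Prop) {c : F} (hc : c ≠ 0) :
    hammingNorm (augEncode F K P (0, c)) = Fintype.card {x // P x} := by
  simpa [hc] using hammingNorm_augEncode_add_card P 0 c

end Codes

section TraceQuadric

variable {F K : Type*} [Field F] [Fintype F] [Field K] [Fintype K] [Algebra F K]

local notation "q" => Fintype.card F
local notation "κ" => quadricSign (Algebra.traceForm F K)

lemma card_traceQuadric (hF : ringChar F ≠ 2) {k : ℕ} (hn : Module.finrank F K = 2 * k + 3) :
    Fintype.card {x : K // Algebra.trace F K (x ^ 2) = 0} = q ^ (2 * k + 2) := by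
  refine Nat.eq_of_mul_eq_mul_left (Fintype.card_pos (α := F)) ?_
  have h := card_mul_card_isotropic hF (traceForm_nondegenerate F K)
    (Algebra.traceForm_isSymm F) ⟨k + 1, hn⟩
  simp only [Algebra.traceForm_apply, ← sq] at h
  rw [Fintype.card_subtype, h, Module.card_eq_pow_finrank (K := F), hn]
  ring

lemma card_traceQuadric_orthogonal (hF : ringChar F ≠ 2) {k : ℕ}
    (hn : Module.finrank F K = 2 * k + 3) {b : K} (hb : b ≠ 0) :
    (#{x | Algebra.trace F K (x ^ 2) = 0 ∧ Algebra.trace F K (b * x) = 0} : ℤ) =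
      q ^ (2 * k + 1) + κ b * (q - 1) * q ^ k := by
  have hq : (q : ℤ) ≠ 0 := Nat.cast_ne_zero.2 Fintype.card_ne_zero
  have h := card_mul_card_isotropic_orthogonal (k := k + 1) hF (traceForm_nondegenerate F K)
    (Algebra.traceForm_isSymm F) hn hb
  simp only [Algebra.traceForm_apply, ← sq] at h
  refine mul_left_cancel₀ hq ?_
  linear_combination h

lemma card_traceQuadric_apply_eq (hF : ringChar F ≠ 2) {k : ℕ}
    (hn : Module.finrank F K = 2 * k + 3) {b : K} (hb : b ≠ 0) {t : F} (ht : t ≠ 0) :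
    (#{x | Algebra.trace F K (x ^ 2) = 0 ∧ Algebra.trace F K (b * x) = t} : ℤ) =
      q ^ (2 * k + 1) - κ b * q ^ k := by
  have hq : (q : ℤ) ≠ 0 := Nat.cast_ne_zero.2 Fintype.card_ne_zero
  have h := card_mul_card_isotropic_apply_eq (k := k + 1) hF (traceForm_nondegenerate F K)
    (Algebra.traceForm_isSymm F) hn hb ht
  simp only [Algebra.traceForm_apply, ← sq] at h
  refine mul_left_cancel₀ hq ?_
  linear_combination h

lemma cast_card_traceQuadric_apply_eq_zero (hF : ringChar F ≠ 2) {k : ℕ} (hk : k ≠ 0)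
    (hn : Module.finrank F K = 2 * k + 3) (b : K) (t : F) :
    (#{x | Algebra.trace F K (x ^ 2) = 0 ∧ Algebra.trace F K (b * x) = t} : F) = 0 := by
  have hq : (q : F) = 0 := Nat.cast_card_eq_zero F
  rw [← Int.cast_natCast]
  obtain rfl | hb := eq_or_ne b 0
  · obtain rfl | ht := eq_or_ne t 0
    · simp [← Fintype.card_subtype, card_traceQuadric hF hn, hq]
    · simp [ht.symm]
  · obtain rfl | ht := eq_or_ne t 0
    · simp [card_traceQuadric_orthogonal hF hn hb, hq, hk]
    · simp [card_traceQuadric_apply_eq hF hn hb ht, hq, hk]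

/-- The encoder of the augmented code whose defining set is the quadric `Tr (x ^ 2) = 0`. -/
abbrev traceQuadricEncode (F K : Type*) [Field F] [Field K] [Algebra F K] :
    K × F →ₗ[F] ({x : K // Algebra.trace F K (x ^ 2) = 0} → F) :=
  augEncode F K fun x ↦ Algebra.trace F K (x ^ 2) = 0

local notation "E" => traceQuadricEncode F K

lemma sum_traceQuadricEncode_sq (hF : ringChar F ≠ 2) {k : ℕ} (hk : k ≠ 0)
    (hn : Module.finrank F K = 2 * k + 3) (z : K × F) : ∑ d, E z d ^ 2 = 0 := by
  rw [← sum_fiberwise' univ (E z) (· ^ 2)]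
  refine sum_eq_zero fun t _ ↦ ?_
  rw [sum_const, nsmul_eq_mul, card_augEncode_eq,
    cast_card_traceQuadric_apply_eq_zero hF hk hn, zero_mul]

lemma hammingNorm_traceQuadricEncode_zero_right (hF : ringChar F ≠ 2) {k : ℕ}
    (hn : Module.finrank F K = 2 * k + 3) {b : K} (hb : b ≠ 0) :
    (hammingNorm (E (b, 0)) : ℤ) = (q - 1) * q ^ (2 * k + 1) - κ b * (q - 1) * q ^ k := by
  have h := hammingNorm_augEncode_add_card (fun x ↦ Algebra.trace F K (x ^ 2) = 0) b (0 : F)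
  rw [card_traceQuadric hF hn, neg_zero] at h
  zify at h
  linear_combination h - card_traceQuadric_orthogonal hF hn hb

lemma hammingNorm_traceQuadricEncode (hF : ringChar F ≠ 2) {k : ℕ}
    (hn : Module.finrank F K = 2 * k + 3) {b : K} (hb : b ≠ 0) {c : F} (hc : c ≠ 0) :
    (hammingNorm (E (b, c)) : ℤ) = (q - 1) * q ^ (2 * k + 1) + κ b * q ^ k := by
  have h := hammingNorm_augEncode_add_card (fun x ↦ Algebra.trace F K (x ^ 2) = 0) b c
  rw [card_traceQuadric hF hn] at h
  zify at h
  linear_combination h - card_traceQuadric_apply_eq hF hn hb (neg_ne_zero.2 hc)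

lemma le_hammingNorm_traceQuadricEncode (hF : ringChar F ≠ 2) {k : ℕ}
    (hn : Module.finrank F K = 2 * k + 3) {z : K × F} (hz : z ≠ 0) :
    (q - 1) * q ^ k * (q ^ (k + 1) - 1) ≤ (hammingNorm (E z) : ℤ) := by
  have hq : (1 : ℤ) < q := mod_cast Fintype.one_lt_card (α := F)
  have hqk : (0 : ℤ) < q ^ k := by positivity
  have hqk' : (q ^ k : ℤ) ≤ (q - 1) * q ^ k := le_mul_of_one_le_left hqk.le (by lia)
  have hdist : ((q - 1) * q ^ k * (q ^ (k + 1) - 1) : ℤ) =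
      (q - 1) * q ^ (2 * k + 1) - (q - 1) * q ^ k := by ring
  rw [hdist]
  obtain ⟨b, c⟩ := z
  obtain rfl | hb := eq_or_ne b 0
  · have hc : c ≠ 0 := by rintro rfl; exact hz rfl
    rw [hammingNorm_augEncode_zero_left _ hc, card_traceQuadric hF hn]
    have : (0 : ℤ) < q ^ (2 * k + 1) := by positivity
    push_cast
    rw [pow_succ _ (2 * k + 1)]
    linarith
  · obtain rfl | hc := eq_or_ne c 0
    · rw [hammingNorm_traceQuadricEncode_zero_right hF hn hb]
      rcases quadricSign_trichotomy (Algebra.traceForm F K) b with h | h | h <;> rw [h] <;> linarith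
    · rw [hammingNorm_traceQuadricEncode hF hn hb hc]
      rcases quadricSign_trichotomy (Algebra.traceForm F K) b with h | h | h <;> rw [h] <;> linarith

lemma traceQuadricEncode_injective (hF : ringChar F ≠ 2) {k : ℕ}
    (hn : Module.finrank F K = 2 * k + 3) : Function.Injective E := by
  refine (injective_iff_map_eq_zero _).2 fun z hz ↦ ?_
  by_contra hz0
  have hq : (1 : ℤ) < q := mod_cast Fintype.one_lt_card (α := F)
  have hqk : (1 : ℤ) < q ^ (k + 1) := one_lt_pow₀ hq k.succ_ne_zero
  have hpos : (0 : ℤ) < (q - 1) * q ^ k * (q ^ (k + 1) - 1) :=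
    mul_pos (mul_pos (sub_pos.2 hq) (by positivity)) (sub_pos.2 hqk)
  have hle := le_hammingNorm_traceQuadricEncode hF hn hz0
  rw [hz, hammingNorm_zero, Nat.cast_zero] at hle
  exact hpos.not_ge hle

lemma isMinDist_range_traceQuadricEncode (hF : ringChar F ≠ 2) {k : ℕ}
    (hn : Module.finrank F K = 2 * k + 3) :
    IsMinDist (Set.range E) ((q - 1) * q ^ k * (q ^ (k + 1) - 1)) := by
  have hq : (1 : ℤ) < q := mod_cast Fintype.one_lt_card (α := F)
  have hcast : (((q - 1) * q ^ k * (q ^ (k + 1) - 1) : ℕ) : ℤ) =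
      (q - 1) * q ^ k * (q ^ (k + 1) - 1) := by
    rw [Nat.cast_mul, Nat.cast_mul, Nat.cast_pred Fintype.card_pos,
      Nat.cast_pred (pow_pos Fintype.card_pos _), Nat.cast_pow, Nat.cast_pow]
  constructor
  · have hcard := two_mul_card_quadricSign_eq (k := k + 1) hF (traceForm_nondegenerate F K)
      (Algebra.traceForm_isSymm F) hn (.inl rfl)
    have hpos : (0 : ℤ) < (q - 1) * (q ^ (2 * (k + 1)) + 1 * q ^ (k + 1)) :=
      mul_pos (sub_pos.2 hq) (by positivity)
    obtain ⟨b, hb⟩ := card_pos.1 (by lia : 0 < #{b | κ b = 1})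
    have hκ : κ b = 1 := (mem_filter.1 hb).2
    have hb0 : b ≠ 0 := by rintro rfl; simp [quadricSign_zero_right] at hκ
    refine ⟨E (b, 0), ⟨_, rfl⟩, fun h ↦ hb0 ?_, ?_⟩
    · exact congrArg Prod.fst (traceQuadricEncode_injective hF hn (h.trans (map_zero E).symm))
    · have hw := hammingNorm_traceQuadricEncode_zero_right hF hn hb0
      refine Nat.cast_injective (R := ℤ) ?_
      rw [hw, hκ, hcast]
      ring
  · rintro _ ⟨z, rfl⟩ hz
    rw [← Nat.cast_le (α := ℤ), hcast]
    exact le_hammingNorm_traceQuadricEncode hF hn fun h ↦ hz (by rw [h, map_zero])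

lemma isMinDist_dualCode_traceQuadric_three (hF : ringChar F ≠ 2) {k : ℕ}
    (hn : Module.finrank F K = 2 * k + 3) :
    IsMinDist (dualCode (augCode F K fun x ↦ Algebra.trace F K (x ^ 2) = 0)) 3 := by
  have hcard : 1 < Fintype.card {x : K // Algebra.trace F K (x ^ 2) = 0} := by
    rw [card_traceQuadric hF hn]
    exact Nat.one_lt_pow (by lia) Fintype.one_lt_card
  have h0 : Algebra.trace F K (0 ^ 2) = 0 := by simp
  obtain ⟨⟨x, hx⟩, hx0⟩ := Fintype.exists_ne_of_one_lt_card hcard ⟨0, h0⟩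
  exact isMinDist_dualCode_augCode_three (P := fun x ↦ Algebra.trace F K (x ^ 2) = 0)
    (Ring.two_ne_zero hF) h0 (fun h ↦ hx0 (Subtype.ext h)) hx (by rwa [neg_sq])

lemma finrank_range_traceQuadricEncode (hF : ringChar F ≠ 2) {k : ℕ}
    (hn : Module.finrank F K = 2 * k + 3) :
    Module.finrank F (LinearMap.range E) = 2 * k + 3 + 1 := by
  rw [LinearMap.finrank_range_of_inj (traceQuadricEncode_injective hF hn), Module.finrank_prod, hn,
    Module.finrank_self]

lemma range_traceQuadricEncode_subset_dualCode (hF : ringChar F ≠ 2) {k : ℕ} (hk : k ≠ 0)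
    (hn : Module.finrank F K = 2 * k + 3) : Set.range E ⊆ dualCode (Set.range E) := by
  refine subset_dualCode_of_sum_sq_eq_zero (W := LinearMap.range E) (Ring.two_ne_zero hF) ?_
  rintro _ ⟨z, rfl⟩
  exact sum_traceQuadricEncode_sq hF hk hn z

lemma sum_singleton_hammingNorm_traceQuadricEncode_zero (hF : ringChar F ≠ 2) {k : ℕ}
    (hn : Module.finrank F K = 2 * k + 3) :
    ∑ c, ({(hammingNorm (E (0, c)) : ℤ)} : Multiset ℤ) =
      {0} + (q - 1) • {(q : ℤ) ^ (2 * k + 2)} := by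
  rw [sum_eq_add_nsmul_of_ne_zero fun c hc ↦ by
    rw [hammingNorm_augEncode_zero_left _ hc, card_traceQuadric hF hn, Nat.cast_pow],
    Prod.mk_zero_zero, map_zero, hammingNorm_zero, Nat.cast_zero]

lemma sum_singleton_hammingNorm_traceQuadricEncode (hF : ringChar F ≠ 2) {k : ℕ}
    (hn : Module.finrank F K = 2 * k + 3) {b : K} (hb : b ≠ 0) :
    ∑ c, ({(hammingNorm (E (b, c)) : ℤ)} : Multiset ℤ) =
      {((q : ℤ) - 1) * q ^ (2 * k + 1) - κ b * (q - 1) * q ^ k} +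
        (q - 1) • {((q : ℤ) - 1) * q ^ (2 * k + 1) + κ b * q ^ k} := by
  rw [sum_eq_add_nsmul_of_ne_zero fun c hc ↦ by rw [hammingNorm_traceQuadricEncode hF hn hb hc],
    hammingNorm_traceQuadricEncode_zero_right hF hn hb]

lemma card_erase_zero_quadricSign_eq_zero (hF : ringChar F ≠ 2) {k : ℕ}
    (hn : Module.finrank F K = 2 * k + 3) :
    #{b ∈ univ.erase 0 | κ b = 0} = q ^ (2 * k + 2) - 1 := by
  rw [filter_erase, card_erase_of_mem (by simp [quadricSign_zero_right]),
    card_quadricSign_eq_zero (k := k + 1) hF (traceForm_nondegenerate F K)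
      (Algebra.traceForm_isSymm F) hn]
  rfl

lemma map_hammingNorm_traceQuadricEncode (hF : ringChar F ≠ 2) {k : ℕ}
    (hn : Module.finrank F K = 2 * k + 3) {ε : ℤ} (hε : ε = 1 ∨ ε = -1) :
    (univ : Finset (K × F)).val.map (fun z ↦ (hammingNorm (E z) : ℤ)) =
      Multiset.replicate 1 0 + Multiset.replicate (q - 1) ((q : ℤ) ^ (2 * k + 2))
      + Multiset.replicate (q * (q ^ (2 * k + 2) - 1)) (((q : ℤ) - 1) * q ^ (2 * k + 1))
      + Multiset.replicate ((q - 1) * #{b | κ b = ε}) ((q - 1) * q ^ (2 * k + 1) + ε * q ^ k)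
      + Multiset.replicate ((q - 1) * #{b | κ b = -ε}) ((q - 1) * q ^ (2 * k + 1) - ε * q ^ k)
      + Multiset.replicate #{b | κ b = ε} ((q - 1) * q ^ (2 * k + 1) - ε * (q - 1) * q ^ k)
      + Multiset.replicate #{b | κ b = -ε} ((q - 1) * q ^ (2 * k + 1) + ε * (q - 1) * q ^ k) := by
  have hsign (δ : ℤ) (hδ : δ ≠ 0) : #{b ∈ univ.erase 0 | κ b = δ} = #{b | κ b = δ} := by
    rw [filter_erase, erase_eq_of_notMem (by simp [quadricSign_zero_right, hδ.symm])]
  have hε0 : ε ≠ 0 := by rintro rfl; simp at hε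
  have hsum := sum_comp_eq_nsmul_of_trichotomy (univ.erase (0 : K)) hε
    (quadricSign_trichotomy (Algebra.traceForm F K)) fun t ↦
      ({((q : ℤ) - 1) * q ^ (2 * k + 1) - t * (q - 1) * q ^ k} : Multiset ℤ) +
        (q - 1) • {((q : ℤ) - 1) * q ^ (2 * k + 1) + t * q ^ k}
  rw [card_erase_zero_quadricSign_eq_zero hF hn, hsign ε hε0, hsign (-ε) (neg_ne_zero.2 hε0)]
    at hsum
  rw [val_map_eq_sum_singleton, Fintype.sum_prod_type, ← add_sum_erase _ _ (mem_univ 0),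
    sum_singleton_hammingNorm_traceQuadricEncode_zero hF hn, sum_congr rfl fun b hb ↦
      sum_singleton_hammingNorm_traceQuadricEncode hF hn (ne_of_mem_erase hb), hsum]
  have hq : q = 1 + (q - 1) := (Nat.add_sub_cancel' Fintype.card_pos).symm
  have hmid : (q * (q ^ (2 * k + 2) - 1)) = (q ^ (2 * k + 2) - 1) +
      (q ^ (2 * k + 2) - 1) * (q - 1) := by
    nth_rw 1 [hq]
    ring
  simp only [← Multiset.nsmul_singleton, nsmul_add, smul_smul, one_smul, zero_mul, sub_zero,
    add_zero, neg_mul, sub_neg_eq_add, ← sub_eq_add_neg, hmid, add_smul, mul_comm (q - 1)]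
  abel

lemma map_hammingNorm_range_traceQuadricEncode (hF : ringChar F ≠ 2) {k : ℕ}
    (hn : Module.finrank F K = 2 * k + 3) {ε : ℤ} (hε : ε = 1 ∨ ε = -1)
    [Fintype (Set.range E)] :
    ((Set.range E).toFinset.val.map fun c ↦ (hammingNorm c : ℤ)) =
      Multiset.replicate 1 0 + Multiset.replicate (q - 1) ((q : ℤ) ^ (2 * k + 2))
      + Multiset.replicate (q * (q ^ (2 * k + 2) - 1)) (((q : ℤ) - 1) * q ^ (2 * k + 1))
      + Multiset.replicate (((q - 1) ^ 2 * (q ^ (2 * k + 2) + ε * q ^ (k + 1))) / 2 : ℤ).toNat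
          ((q - 1) * q ^ (2 * k + 1) + ε * q ^ k)
      + Multiset.replicate (((q - 1) ^ 2 * (q ^ (2 * k + 2) + -ε * q ^ (k + 1))) / 2 : ℤ).toNat
          ((q - 1) * q ^ (2 * k + 1) - ε * q ^ k)
      + Multiset.replicate (((q - 1) * (q ^ (2 * k + 2) + ε * q ^ (k + 1))) / 2 : ℤ).toNat
          ((q - 1) * q ^ (2 * k + 1) - ε * (q - 1) * q ^ k)
      + Multiset.replicate (((q - 1) * (q ^ (2 * k + 2) + -ε * q ^ (k + 1))) / 2 : ℤ).toNat
          ((q - 1) * q ^ (2 * k + 1) + ε * (q - 1) * q ^ k) := by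
  have hcount (δ : ℤ) (hδ : δ = 1 ∨ δ = -1) :
      ((q - 1) * (q ^ (2 * k + 2) + δ * q ^ (k + 1)) : ℤ) = 2 * #{b | κ b = δ} :=
    (two_mul_card_quadricSign_eq (k := k + 1) hF (traceForm_nondegenerate F K)
      (Algebra.traceForm_isSymm F) hn hδ).symm
  have hhalf (δ : ℤ) (hδ : δ = 1 ∨ δ = -1) :
      (((q - 1) * (q ^ (2 * k + 2) + δ * q ^ (k + 1))) / 2 : ℤ).toNat = #{b | κ b = δ} := by
    rw [hcount δ hδ, Int.mul_ediv_cancel_left _ two_ne_zero, Int.toNat_natCast]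
  have hhalf_mul (δ : ℤ) (hδ : δ = 1 ∨ δ = -1) :
      (((q - 1) ^ 2 * (q ^ (2 * k + 2) + δ * q ^ (k + 1))) / 2 : ℤ).toNat =
        (q - 1) * #{b | κ b = δ} := by
    rw [sq, mul_assoc, hcount δ hδ, mul_left_comm, Int.mul_ediv_cancel_left _ two_ne_zero,
      ← Nat.cast_pred Fintype.card_pos, ← Nat.cast_mul, Int.toNat_natCast]
  have hnegε : -ε = 1 ∨ -ε = -1 := by lia
  have hrange : (Set.range E).toFinset = univ.map ⟨E, traceQuadricEncode_injective hF hn⟩ := by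
    ext
    simp
  rw [hhalf ε hε, hhalf (-ε) hnegε, hhalf_mul ε hε, hhalf_mul (-ε) hnegε,
    ← map_hammingNorm_traceQuadricEncode hF hn hε, hrange, map_val, Multiset.map_map]
  rfl

end TraceQuadric

theorem stmt12 (p e q m l : ℕ) (hp : p.Prime) (hodd : Odd p) (he : 0 < e)
    (hq : q = p ^ e) (hmodd : Odd m) (hm3 : 3 ≤ m)
    (hl : l = e * (p - 1) * (m + 3) / 4)
    (Fq Fm : Type) [Field Fq] [Field Fm] [Fintype Fq] [Fintype Fm] [Algebra Fq Fm]
    (hcq : Fintype.card Fq = q) (hcm : Fintype.card Fm = q ^ m)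
    (C : Set ({x : Fm // Algebra.trace Fq Fm (x ^ 2) = 0} → Fq))
    (hC : C = augCode Fq Fm (fun x => Algebra.trace Fq Fm (x ^ 2) = 0)) :
    -- length `q^{m-1}`
    Fintype.card {x : Fm // Algebra.trace Fq Fm (x ^ 2) = 0} = q ^ (m - 1) ∧
    -- dimension `m + 1`
    Nat.card C = q ^ (m + 1) ∧
    -- minimum distance
    IsMinDist C ((q - 1) * q ^ ((m - 3) / 2) * (q ^ ((m - 1) / 2) - 1)) ∧
    -- weight distribution as a multiset
    (C.toFinset.val.map fun c => (hammingNorm c : ℤ))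
      = Multiset.replicate 1 (0 : ℤ)
        + Multiset.replicate (q - 1) ((q : ℤ) ^ (m - 1))
        + Multiset.replicate (q * (q ^ (m - 1) - 1)) (((q : ℤ) - 1) * (q : ℤ) ^ (m - 2))
        + Multiset.replicate
            (((((q : ℤ) - 1) ^ 2 * ((q : ℤ) ^ (m - 1) + (-1) ^ l * (q : ℤ) ^ ((m - 1) / 2))) / 2).toNat)
            (((q : ℤ) - 1) * (q : ℤ) ^ (m - 2) + (-1) ^ l * (q : ℤ) ^ ((m - 3) / 2))
        + Multiset.replicate
            (((((q : ℤ) - 1) ^ 2 * ((q : ℤ) ^ (m - 1) + (-1) ^ (l + 1) * (q : ℤ) ^ ((m - 1) / 2))) / 2).toNat)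
            (((q : ℤ) - 1) * (q : ℤ) ^ (m - 2) - (-1) ^ l * (q : ℤ) ^ ((m - 3) / 2))
        + Multiset.replicate
            (((((q : ℤ) - 1) * ((q : ℤ) ^ (m - 1) + (-1) ^ l * (q : ℤ) ^ ((m - 1) / 2))) / 2).toNat)
            (((q : ℤ) - 1) * (q : ℤ) ^ (m - 2) - (-1) ^ l * ((q : ℤ) - 1) * (q : ℤ) ^ ((m - 3) / 2))
        + Multiset.replicate
            (((((q : ℤ) - 1) * ((q : ℤ) ^ (m - 1) + (-1) ^ (l + 1) * (q : ℤ) ^ ((m - 1) / 2))) / 2).toNat)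
            (((q : ℤ) - 1) * (q : ℤ) ^ (m - 2) + (-1) ^ l * ((q : ℤ) - 1) * (q : ℤ) ^ ((m - 3) / 2)) ∧
    -- self-orthogonality for `m > 3`
    (3 < m → C ⊆ dualCode C) ∧
    -- the dual code has dimension `q^{m-1} - m - 1` and minimum distance `3`
    Nat.card (dualCode C) = q ^ (q ^ (m - 1) - m - 1) ∧
    IsMinDist (dualCode C) 3 := by
  obtain ⟨k, rfl⟩ : ∃ k, m = 2 * k + 3 := ⟨(m - 3) / 2, by obtain ⟨r, rfl⟩ := hmodd; lia⟩
  obtain rfl : C = Set.range (traceQuadricEncode Fq Fm) := hC.trans (coe_range_augEncode _).symm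
  subst hcq
  have hF : ringChar Fq ≠ 2 := ringChar_ne_two_of_odd_card (hq ▸ hodd.pow)
  have hn : Module.finrank Fq Fm = 2 * k + 3 := Nat.pow_right_injective Fintype.one_lt_card
    ((Module.card_eq_pow_finrank (K := Fq) (V := Fm)).symm.trans hcm)
  have hD := card_traceQuadric hF hn
  have hdim := finrank_range_traceQuadricEncode hF hn
  have hexp : 2 * k + 3 - 1 = 2 * k + 2 ∧ 2 * k + 3 - 2 = 2 * k + 1 ∧ (2 * k + 3 - 3) / 2 = k ∧
      (2 * k + 2) / 2 = k + 1 := by lia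
  simp only [hexp, pow_succ (-1 : ℤ) l, mul_neg_one]
  refine ⟨hD, ?_, isMinDist_range_traceQuadricEncode hF hn,
    ?_, fun hm ↦ range_traceQuadricEncode_subset_dualCode hF (by lia) hn, ?_,
    hC ▸ isMinDist_dualCode_traceQuadric_three hF hn⟩
  · rw [← hdim, ← Nat.card_eq_fintype_card]
    exact Module.natCard_eq_pow_finrank (V := LinearMap.range (traceQuadricEncode Fq Fm))
  · convert map_hammingNorm_range_traceQuadricEncode hF hn (neg_one_pow_eq_or ℤ l)
  · refine (natCard_dualCode (LinearMap.range (traceQuadricEncode Fq Fm))).trans ?_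
    rw [hdim, hD, Nat.sub_sub]
end
end

section
/- Let f : F_q → F_p belong to the class RF with sign ε and dual f*. Let s ∈ F_p^*, a ∈ F_p, b ∈ F_q, and let N_s be the number of x ∈ F_q with a f(x) + Tr_{q/p}(bx) = s. If e is even, put σ = ε (η_0(−1))^{e/2} ∈ {1, −1}; then N_s = 0 if a = 0 and b = 0; N_s = p^{e−1} if a = 0 and b ≠ 0; N_s = p^{e−1} + σ(p−1)p^{e/2−1} if a ≠ 0 and f*(−b/a) = a^{−1}s; and N_s = p^{e−1} − σ p^{e/2−1} if a ≠ 0 and f*(−b/a) ≠ a^{−1}s. If e is odd, put τ = ε (η_0(−1))^{(e+1)/2} ∈ {1, −1}; then N_s = 0 if a = 0 and b = 0; N_s = p^{e−1} if a = 0 and b ≠ 0, or if a ≠ 0 and f*(−b/a) = a^{−1}s; N_s = p^{e−1} + τ p^{(e−1)/2} if a ≠ 0, f*(−b/a) ≠ a^{−1}s and η_0(f*(−b/a) − a^{−1}s) = 1; and N_s = p^{e−1} − τ p^{(e−1)/2} if a ≠ 0, f*(−b/a) ≠ a^{−1}s and η_0(f*(−b/a) − a^{−1}s) = −1. -/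
open scoped Classical

noncomputable section

/-- The complex primitive `p`-th root of unity `ζ_p = exp(2πi/p)`. -/
def zetapc (p : ℕ) : ℂ := Complex.exp (2 * Real.pi * Complex.I / p)

/-- `√p* = i^{((p-1)/2)²} √p`, a square root of `p* = (-1)^{(p-1)/2} p`. -/
def sqrtpstar (p : ℕ) : ℂ := Complex.I ^ (((p - 1) / 2) ^ 2) * (Real.sqrt p : ℂ)

/-- The quadratic character of a finite field: `1` on nonzero squares, `-1` on
nonsquares, `0` at `0`. -/
def qchar (F : Type*) [MonoidWithZero F] : F → ℤ :=
  fun y => if y = 0 then 0 else if IsSquare y then 1 else -1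

/-- `f : F_q → F_p` belongs to the class `RF` of weakly regular bent functions,
with sign `ε` and dual `fstar`. -/
structure IsRF (p e : ℕ) (Fq : Type*) [Field Fq] [Fintype Fq] [Algebra (ZMod p) Fq]
    (f : Fq → ZMod p) (ε : ℤ) (fstar : Fq → ZMod p) : Prop where
  sign : ε = 1 ∨ ε = -1
  map_zero : f 0 = 0
  hom : ∃ h : ℕ, Even h ∧ 0 < h ∧ Nat.gcd (h - 1) (p - 1) = 1 ∧
    ∀ a : ZMod p, a ≠ 0 → ∀ x : Fq,
      f (algebraMap (ZMod p) Fq a * x) = a ^ h * f x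
  walsh : ∀ β : Fq,
    (∑ x : Fq, zetapc p ^ (f x - Algebra.trace (ZMod p) Fq (β * x)).val)
      = (ε : ℂ) * sqrtpstar p ^ e * zetapc p ^ (fstar β).val

/-!
Write `ψ(t) = ζ_p^t` and `η` for the quadratic character of `F_p`. If `N_t` counts the solutions of
`u x = t` for some `u : T → F_p`, then `∑_x ψ(u x) = ∑_t N_t ψ(t)`. Over `ℤ` the only linear
relations between the powers of `ζ_p` are the constant ones, because `Φ_p` is irreducible. Hence,
once the sum is also known to equal `∑_t a_t ψ(t)` with `a_t ∈ ℤ`, the difference `N_t - a_t` does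
not depend on `t`, and `∑_t N_t = |T|` determines it.

For `a = 0` and `b ≠ 0` the sum vanishes. For `a ≠ 0` divide the equation by `a`, so that the sum is
the Walsh value `ε √p*^e ψ(c)`. When `e` is even, `√p*^e` is the integer `(η(-1) p)^(e/2)`; when `e`
is odd one factor `√p*` is left over and is expanded as the Gauss sum `∑_x η(x) ψ(x)`.

That expansion needs the sign of the Gauss sum. Its square is `η(-1) p`, so it is `δ √p*` with
`δ = ±1`. With `p = 2m + 1`, multiplying together the values of the sine shows
`√p* = ∏_{k=1}^m (ζ^(mk) - ζ^((m+1)k))`, so `Φ_p` divides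
`∑_j η(j) X^j - δ ∏_k (X^(mk) - X^((m+1)k))`. Modulo `p`, where `Φ_p = (X - 1)^(2m)` and
`η(j) = j^m`, both terms have leading part `(-1)^m m! (X - 1)^m` at `1`, up to the factor `δ`, and
so `δ = 1`.
-/

open Finset Polynomial

theorem isPrimitiveRoot_zetapc {n : ℕ} (hn : n ≠ 0) : IsPrimitiveRoot (zetapc n) n :=
  Complex.isPrimitiveRoot_exp n hn

section SineProduct

open Real

theorem sin_pi_mul_div_nonneg {a b : ℝ} (ha : 0 ≤ a) (hab : a ≤ b) : 0 ≤ sin (π * a / b) := by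
  have hb : 0 ≤ b := ha.trans hab
  refine sin_nonneg_of_nonneg_of_le_pi (by positivity) ?_
  exact div_le_of_le_mul₀ hb pi_nonneg (by gcongr)

theorem prod_range_two_mul_sin_pi_mul_div (n : ℕ) :
    ∏ k ∈ range n, 2 * sin (π * (k + 1) / (n + 1)) = n + 1 := by
  have hζ := isPrimitiveRoot_zetapc n.succ_ne_zero
  calc ∏ k ∈ range n, 2 * sin (π * (k + 1) / (n + 1))
      = ∏ k ∈ range n, ‖1 - zetapc (n + 1) ^ (k + 1)‖ := prod_congr rfl fun k hk => ?_
    _ = n + 1 := by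
      rw [← norm_prod, hζ.prod_one_sub_pow_eq_order, ← Nat.cast_succ, Complex.norm_natCast,
        Nat.cast_succ]
  have hkn : (k : ℝ) + 1 ≤ n + 1 := by exact_mod_cast Nat.succ_le_succ (mem_range.1 hk).le
  have hsin : 0 ≤ sin (π * (k + 1) / (n + 1)) := sin_pi_mul_div_nonneg (by positivity) hkn
  have hpow : zetapc (n + 1) ^ (k + 1)
      = Complex.exp (Complex.I * (2 * (π * (k + 1) / (n + 1)) : ℝ)) := by
    rw [zetapc, ← Complex.exp_nat_mul]
    congr 1
    push_cast
    ring
  rw [norm_sub_rev, hpow, Complex.norm_exp_I_mul_ofReal_sub_one, mul_div_cancel_left₀ _ two_ne_zero,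
    norm_of_nonneg (by positivity)]

theorem prod_range_two_mul_sin_pi_mul_div_two_mul_add_one (m : ℕ) :
    ∏ k ∈ range m, 2 * sin (π * (k + 1) / (2 * m + 1)) = √(2 * m + 1) := by
  have hmirror : ∏ k ∈ range m, 2 * sin (π * ((m + k : ℕ) + 1) / (2 * m + 1))
      = ∏ k ∈ range m, 2 * sin (π * (k + 1) / (2 * m + 1)) := by
    rw [← prod_range_reflect]
    refine prod_congr rfl fun k hk => ?_
    obtain ⟨d, rfl⟩ := Nat.exists_eq_add_of_lt (mem_range.1 hk)
    rw [← sin_pi_sub, show k + d + 1 + (k + d + 1 - 1 - k) = k + 2 * d + 1 by omega]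
    congr 2
    push_cast
    field_simp
    ring
  have hsq := prod_range_two_mul_sin_pi_mul_div (2 * m)
  push_cast at hsq
  rw [two_mul m, prod_range_add, hmirror] at hsq
  refine ((sqrt_eq_iff_mul_self_eq (by positivity) (prod_nonneg fun k hk => ?_)).2 hsq.symm).symm
  have hkm : (k : ℝ) + 1 ≤ 2 * m + 1 := by
    exact_mod_cast Nat.succ_le_succ ((mem_range.1 hk).le.trans (Nat.le_mul_of_pos_left m two_pos))
  exact mul_nonneg zero_le_two (sin_pi_mul_div_nonneg (by positivity) hkm)

end SineProduct

theorem prod_range_neg_one_pow_mul_I (n : ℕ) :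
    ∏ k ∈ range n, ((-1) ^ k * Complex.I) = Complex.I ^ (n ^ 2) := by
  induction n with
  | zero => simp
  | succ n ih =>
    rw [prod_range_succ, ih, ← Complex.I_sq]
    ring

theorem zetapc_pow_sub_zetapc_pow (m k : ℕ) :
    zetapc (2 * m + 1) ^ (m * (k + 1)) - zetapc (2 * m + 1) ^ ((m + 1) * (k + 1))
      = (-1) ^ k * Complex.I * (2 * Real.sin (Real.pi * (k + 1) / (2 * m + 1)) : ℝ) := by
  have hm : (2 * m + 1 : ℂ) ≠ 0 := by exact_mod_cast (2 * m).succ_ne_zero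
  set θ : ℂ := Real.pi / (2 * m + 1) with hθ
  have hpow (n : ℕ) : zetapc (2 * m + 1) ^ n = Complex.exp (2 * n * θ * Complex.I) := by
    rw [zetapc, ← Complex.exp_nat_mul, hθ]
    congr 1
    push_cast
    ring
  -- `2mθ = π - θ` and `2(m+1)θ = π + θ`, where `θ = π / (2m+1)`
  have hlow : zetapc (2 * m + 1) ^ m = -Complex.exp (-θ * Complex.I) := by
    rw [hpow, ← Complex.exp_add_pi_mul_I, hθ]
    congr 1
    field_simp
    ring
  have hhigh : zetapc (2 * m + 1) ^ (m + 1) = -Complex.exp (θ * Complex.I) := by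
    rw [hpow, ← Complex.exp_add_pi_mul_I, hθ]
    congr 1
    push_cast
    field_simp
    ring
  have hsin : ((2 * Real.sin (Real.pi * (k + 1) / (2 * m + 1)) : ℝ) : ℂ)
      = (Complex.exp (-θ * Complex.I) ^ (k + 1) - Complex.exp (θ * Complex.I) ^ (k + 1))
        * Complex.I := by
    rw [← Complex.exp_nat_mul, ← Complex.exp_nat_mul, hθ]
    push_cast
    rw [Complex.sin]
    ring_nf
  rw [pow_mul, pow_mul, hlow, hhigh, neg_pow, neg_pow (Complex.exp (θ * Complex.I)), hsin]
  linear_combination (-1) ^ (k + 1) * (Complex.exp (-θ * Complex.I) ^ (k + 1)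
    - Complex.exp (θ * Complex.I) ^ (k + 1)) * Complex.I_sq

theorem prod_range_zetapc_pow_sub_zetapc_pow (m : ℕ) :
    ∏ k ∈ range m,
        (zetapc (2 * m + 1) ^ (m * (k + 1)) - zetapc (2 * m + 1) ^ ((m + 1) * (k + 1)))
      = sqrtpstar (2 * m + 1) := by
  simp only [zetapc_pow_sub_zetapc_pow, prod_mul_distrib]
  rw [← prod_mul_distrib, prod_range_neg_one_pow_mul_I, ← Complex.ofReal_prod,
    prod_range_two_mul_sin_pi_mul_div_two_mul_add_one, sqrtpstar, Nat.add_sub_cancel,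
    Nat.mul_div_cancel_left m two_pos]
  push_cast
  rfl

section CongruenceModP

theorem exists_prod_range_X_pow_sub_X_pow_eq (R : Type*) [CommRing R] (m n : ℕ) :
    ∃ H : R[X], ∏ k ∈ range n, (X ^ (m * (k + 1)) - X ^ ((m + 1) * (k + 1))) = (X - 1) ^ n * H ∧
      H.eval 1 = (-1) ^ n * (n.factorial : R) := by
  refine ⟨∏ k ∈ range n, -(X ^ (m * (k + 1)) * ∑ i ∈ range (k + 1), X ^ i), ?_, ?_⟩
  · rw [← card_range n, ← prod_const, card_range, ← prod_mul_distrib]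
    refine prod_congr rfl fun k _ => ?_
    linear_combination X ^ (m * (k + 1)) * geom_sum_mul (X : R[X]) (k + 1)
  · simp [eval_prod, eval_finsetSum, prod_neg, ← prod_range_add_one_eq_factorial]

theorem C_natCast_pow_succ_mul_X_pow (R : Type*) [CommRing R] (k j : ℕ) :
    C ((j : R) ^ (k + 1)) * X ^ j = X * derivative (C ((j : R) ^ k) * X ^ j) := by
  rw [derivative_C_mul_X_pow]
  rcases j with _ | j
  · simp
  · rw [Nat.add_sub_cancel, pow_succ _ k, pow_succ X j]
    ring

variable {p : ℕ} [Fact p.Prime]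

theorem cyclotomic_zmod_eq_X_sub_one_pow : cyclotomic p (ZMod p) = (X - 1) ^ (p - 1) := by
  have h := cyclotomic_mul_prime_eq_pow_of_not_dvd (ZMod p) (p := p) (n := 1)
    (Nat.Prime.not_dvd_one Fact.out)
  rwa [one_mul, cyclotomic_one] at h

-- The left side is `(X d/dX)^k` applied to `∑ X^j = (X - 1)^(p-1)`; each step lowers the order of
-- vanishing at `1` by one and multiplies the leading coefficient by that order.
theorem exists_sum_range_pow_mul_X_pow_eq {k : ℕ} (hk : k < p) :
    ∃ G : (ZMod p)[X], ∑ j ∈ range p, C ((j : ZMod p) ^ k) * X ^ j = (X - 1) ^ (p - 1 - k) * G ∧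
      G.eval 1 = (-1) ^ k * (k.factorial : ZMod p) := by
  induction k with
  | zero => exact ⟨1, by simp [← cyclotomic_prime, cyclotomic_zmod_eq_X_sub_one_pow], by simp⟩
  | succ k ih =>
    obtain ⟨G, hG, hG1⟩ := ih (Nat.lt_of_succ_lt hk)
    obtain ⟨d, rfl⟩ : ∃ d, p = d + k + 2 := ⟨p - k - 2, by omega⟩
    have hd : (d : ZMod (d + k + 2)) + k + 2 = 0 := by
      exact_mod_cast ZMod.natCast_self (d + k + 2)
    refine ⟨X * (((d + 1 : ℕ) : (ZMod (d + k + 2))[X]) * G + (X - 1) * derivative G), ?_, ?_⟩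
    · simp only [C_natCast_pow_succ_mul_X_pow]
      rw [← mul_sum, ← derivative_sum, hG, show d + k + 2 - 1 - k = d + 1 by omega,
        show d + k + 2 - 1 - (k + 1) = d by omega, derivative_mul, derivative_pow]
      simp only [derivative_sub, derivative_X, derivative_one, Nat.add_sub_cancel]
      rw [C_eq_natCast]
      ring
    · rw [Nat.factorial_succ]
      simp only [eval_mul, eval_X, eval_add, eval_natCast, eval_one, eval_sub, hG1]
      push_cast
      linear_combination (-1) ^ k * (k.factorial : ZMod (d + k + 2)) * hd

theorem eq_one_of_cyclotomic_dvd_sum_sub_prod {m : ℕ} (hm : p = 2 * m + 1) {δ : ZMod p}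
    (h : cyclotomic p (ZMod p) ∣ ∑ j ∈ range p, C ((j : ZMod p) ^ m) * X ^ j
      - C δ * ∏ k ∈ range m, (X ^ (m * (k + 1)) - X ^ ((m + 1) * (k + 1)))) : δ = 1 := by
  have hp : p.Prime := Fact.out
  have hm0 : m ≠ 0 := by
    rintro rfl
    exact hp.ne_one hm
  obtain ⟨G, hG, hG1⟩ := exists_sum_range_pow_mul_X_pow_eq (p := p) (k := m) (by omega)
  obtain ⟨H, hH, hH1⟩ := exists_prod_range_X_pow_sub_X_pow_eq (ZMod p) m m
  have hX : (X - 1 : (ZMod p)[X]) ^ m ≠ 0 := pow_ne_zero m (X_sub_C_ne_zero 1)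
  have hdvd : (X - 1) ^ m ∣ G - C δ * H := by
    rw [← mul_dvd_mul_iff_left hX, ← pow_add, show m + m = p - 1 by omega,
      ← cyclotomic_zmod_eq_X_sub_one_pow]
    convert h using 1
    rw [hG, hH, show p - 1 - m = m by omega]
    ring
  have hroot : eval 1 (G - C δ * H) = 0 := by
    refine dvd_iff_isRoot.1 ?_
    rw [C_1]
    exact (dvd_pow_self _ hm0).trans hdvd
  rw [eval_sub, eval_mul, eval_C, hG1, hH1] at hroot
  have hfact : (m.factorial : ZMod p) ≠ 0 := by
    rw [Ne, ZMod.natCast_eq_zero_iff, hp.dvd_factorial]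
    omega
  have hunit : (-1) ^ m * (m.factorial : ZMod p) ≠ 0 :=
    mul_ne_zero (pow_ne_zero m (neg_ne_zero.2 one_ne_zero)) hfact
  exact mul_right_cancel₀ hunit (by linear_combination -hroot)

end CongruenceModP

theorem sum_range_natCast_zmod {M : Type*} [AddCommMonoid M] (n : ℕ) [NeZero n] (f : ZMod n → M) :
    ∑ j ∈ range n, f j = ∑ x, f x :=
  sum_nbij' (fun j => (j : ZMod n)) ZMod.val (fun _ _ => mem_univ _)
    (fun x _ => mem_range.2 x.val_lt) (fun _ hj => ZMod.val_cast_of_lt (mem_range.1 hj))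
    (fun x _ => ZMod.natCast_zmod_val x) (fun _ _ => rfl)

theorem stdAddChar_natCast (n j : ℕ) [NeZero n] :
    ZMod.stdAddChar (j : ZMod n) = zetapc n ^ j := by
  rw [← Int.cast_natCast, ZMod.stdAddChar_coe, zetapc, ← Complex.exp_nat_mul]
  congr 1
  push_cast
  ring

theorem zetapc_pow_val (n : ℕ) [NeZero n] (x : ZMod n) :
    zetapc n ^ x.val = ZMod.stdAddChar x := by
  rw [← stdAddChar_natCast, ZMod.natCast_zmod_val]

theorem cyclotomic_dvd_of_aeval_zetapc_eq_zero {n : ℕ} (hn : n ≠ 0) {A : ℤ[X]}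
    (h : aeval (zetapc n) A = 0) : cyclotomic n ℤ ∣ A := by
  have hζ := isPrimitiveRoot_zetapc hn
  rw [cyclotomic_eq_minpoly hζ hn.bot_lt]
  exact minpoly.isIntegrallyClosed_dvd (hζ.isIntegral hn.bot_lt) h

theorem sqrtpstar_sq (n : ℕ) : sqrtpstar n ^ 2 = (-1) ^ ((n - 1) / 2) * n := by
  rw [sqrtpstar, mul_pow, ← Complex.ofReal_pow, Real.sq_sqrt n.cast_nonneg, ← pow_mul, mul_comm _ 2,
    pow_mul, Complex.I_sq, sq, pow_mul, Complex.ofReal_natCast]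
  rcases neg_one_pow_eq_or ℂ ((n - 1) / 2) with h | h
  · rw [h, one_pow]
  · rw [h, h]

section GaussSum

variable {p : ℕ} [Fact p.Prime]

theorem ringChar_zmod_ne_two (hp : Odd p) : ringChar (ZMod p) ≠ 2 := by
  rw [ZMod.ringChar_zmod_n]
  exact hp.ne_two_of_dvd_nat dvd_rfl

theorem sqrtpstar_sq_eq_quadraticChar (hp : Odd p) :
    sqrtpstar p ^ 2 = (quadraticChar (ZMod p) (-1) * p : ℤ) := by
  rw [sqrtpstar_sq, quadraticChar_neg_one (ringChar_zmod_ne_two hp), ZMod.card,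
    ZMod.χ₄_eq_neg_one_pow (Nat.odd_iff.1 hp), show p / 2 = (p - 1) / 2 by grind]
  push_cast
  rfl

theorem sum_quadraticChar_mul_stdAddChar_sq (hp : Odd p) :
    (∑ x : ZMod p, (quadraticChar (ZMod p) x : ℂ) * ZMod.stdAddChar x) ^ 2
      = (quadraticChar (ZMod p) (-1) * p : ℤ) := by
  have hχ : (quadraticChar (ZMod p)).ringHomComp (Int.castRingHom ℂ) ≠ 1 := by
    rw [Ne, MulChar.ringHomComp_eq_one_iff Int.cast_injective]
    exact quadraticChar_ne_one (ringChar_zmod_ne_two hp)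
  simpa [gaussSum] using
    gaussSum_sq hχ ((quadraticChar_isQuadratic (ZMod p)).comp _) (ZMod.isPrimitive_stdAddChar p)

theorem eq_one_of_sum_quadraticChar_eq_mul_sqrtpstar (hp : Odd p) {δ : ℤ}
    (h : ∑ x : ZMod p, (quadraticChar (ZMod p) x : ℂ) * ZMod.stdAddChar x = δ * sqrtpstar p) :
    (δ : ZMod p) = 1 := by
  obtain ⟨m, hm⟩ := hp
  let A : ℤ[X] := ∑ j ∈ range p, C (quadraticChar (ZMod p) j) * X ^ j
    - C δ * ∏ k ∈ range m, (X ^ (m * (k + 1)) - X ^ ((m + 1) * (k + 1)))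
  have hA : aeval (zetapc p) A = 0 := by
    have hprod := prod_range_zetapc_pow_sub_zetapc_pow m
    rw [← hm] at hprod
    rw [← sum_range_natCast_zmod] at h
    simp only [stdAddChar_natCast] at h
    simp only [A, map_sub, map_mul, map_sum, map_prod, map_pow, aeval_X, aeval_C, hprod]
    exact sub_eq_zero.2 h
  refine eq_one_of_cyclotomic_dvd_sum_sub_prod hm ?_
  have hdvd := Polynomial.map_dvd (Int.castRingHom (ZMod p))
    (cyclotomic_dvd_of_aeval_zetapc_eq_zero (NeZero.ne p) hA)
  have heuler (j : ℕ) : ((quadraticChar (ZMod p) j : ℤ) : ZMod p) = (j : ZMod p) ^ m := by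
    rw [quadraticChar_eq_pow_of_char_ne_two' (ringChar_zmod_ne_two ⟨m, hm⟩), ZMod.card,
      show p / 2 = m by omega]
  simpa only [A, Polynomial.map_sub, Polynomial.map_mul, Polynomial.map_sum, Polynomial.map_prod,
    Polynomial.map_pow, map_X, map_C, map_cyclotomic_int, Int.coe_castRingHom, heuler] using hdvd

theorem sum_quadraticChar_mul_stdAddChar (hp : Odd p) :
    ∑ x : ZMod p, (quadraticChar (ZMod p) x : ℂ) * ZMod.stdAddChar x = sqrtpstar p := by
  have hsq := (sum_quadraticChar_mul_stdAddChar_sq hp).trans (sqrtpstar_sq_eq_quadraticChar hp).symm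
  refine (sq_eq_sq_iff_eq_or_eq_neg.1 hsq).resolve_right fun hneg => ?_
  have h := eq_one_of_sum_quadraticChar_eq_mul_sqrtpstar hp (δ := -1) (by simpa using hneg)
  exact Ring.neg_one_ne_one_of_char_ne_two (ringChar_zmod_ne_two hp) (by simpa using h)

end GaussSum

section FiberCount

variable {p : ℕ} [Fact p.Prime]

theorem eq_of_sum_mul_stdAddChar_eq_zero {a : ZMod p → ℤ}
    (h : ∑ t, (a t : ℂ) * ZMod.stdAddChar t = 0) (s t : ZMod p) : a s = a t := by
  rw [← sum_range_natCast_zmod p fun t => (a t : ℂ) * ZMod.stdAddChar t, Finset.sum_range] at h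
  simp only [stdAddChar_natCast] at h
  have hconst := ((isPrimitiveRoot_zetapc (NeZero.ne p)).sum_eq_zero_iff_forall_eq_int Fact.out
    fun i : Fin p => a (i : ℕ)).1 h ⟨s.val, s.val_lt⟩ ⟨t.val, t.val_lt⟩
  simpa only [ZMod.natCast_zmod_val] using hconst

variable {T : Type*} [Fintype T] {u : T → ZMod p}

theorem mul_card_fiber_of_sum_stdAddChar_eq {a : ZMod p → ℤ}
    (h : ∑ x, ZMod.stdAddChar (u x) = ∑ t, (a t : ℂ) * ZMod.stdAddChar t) (t : ZMod p) :
    (p : ℤ) * Nat.card {x // u x = t} = Fintype.card T + p * a t - ∑ s, a s := by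
  have hsum : ∑ x, (ZMod.stdAddChar (u x) : ℂ)
      = ∑ s, (Nat.card {x // u x = s} : ℂ) * ZMod.stdAddChar s := by
    rw [← Finset.sum_fiberwise univ u]
    refine sum_congr rfl fun s _ => ?_
    rw [sum_congr rfl fun x hx => by rw [(mem_filter.1 hx).2], sum_const, nsmul_eq_mul,
      Nat.card_eq_fintype_card, Fintype.card_subtype]
  have hcard : ∑ s, (Nat.card {x // u x = s} : ℤ) = Fintype.card T := by
    simp only [Nat.card_eq_fintype_card, ← Nat.cast_sum]
    rw [← Fintype.card_sigma, Fintype.card_congr (Equiv.sigmaFiberEquiv u)]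
  have hconst (s : ZMod p) : (Nat.card {x // u x = s} : ℤ) - a s = Nat.card {x // u x = t} - a t :=
    eq_of_sum_mul_stdAddChar_eq_zero (a := fun s => (Nat.card {x // u x = s} : ℤ) - a s)
      (by push_cast; simp only [sub_mul, sum_sub_distrib]; rw [← h, hsum, sub_self]) s t
  have htotal := sum_congr rfl fun s (_ : s ∈ univ) => hconst s
  rw [sum_sub_distrib, hcard, sum_const, card_univ, ZMod.card, nsmul_eq_mul] at htotal
  linear_combination -htotal

theorem mul_card_fiber_of_sum_eq_mul_stdAddChar {A : ℤ} {c : ZMod p}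
    (h : ∑ x, ZMod.stdAddChar (u x) = (A : ℂ) * ZMod.stdAddChar c) (t : ZMod p) :
    (p : ℤ) * Nat.card {x // u x = t}
      = Fintype.card T + A * if c = t then (p : ℤ) - 1 else -1 := by
  rw [mul_card_fiber_of_sum_stdAddChar_eq (a := fun s => if c = s then A else 0) (by simp [h]) t]
  simp only [sum_ite_eq, mem_univ, if_true]
  split_ifs <;> ring

theorem mul_card_fiber_of_sum_eq_mul_sqrtpstar_mul_stdAddChar (hp : Odd p) {A : ℤ} {c : ZMod p}
    (h : ∑ x, ZMod.stdAddChar (u x) = (A : ℂ) * sqrtpstar p * ZMod.stdAddChar c) (t : ZMod p) :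
    (p : ℤ) * Nat.card {x // u x = t}
      = Fintype.card T + p * (A * quadraticChar (ZMod p) (t - c)) := by
  have hexpand : ∑ x, ZMod.stdAddChar (u x)
      = ∑ s, ((A * quadraticChar (ZMod p) (s - c) : ℤ) : ℂ) * ZMod.stdAddChar s := by
    rw [h, ← sum_quadraticChar_mul_stdAddChar hp, mul_sum, sum_mul]
    refine Fintype.sum_equiv (Equiv.addRight c) _ _ fun x => ?_
    rw [Equiv.coe_addRight, add_sub_cancel_right, AddChar.map_add_eq_mul]
    push_cast
    ring
  have hzero : ∑ s, quadraticChar (ZMod p) (s - c) = 0 :=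
    (Equiv.sum_comp (Equiv.subRight c) (quadraticChar (ZMod p))).trans
      (quadraticChar_sum_zero (ringChar_zmod_ne_two hp))
  rw [mul_card_fiber_of_sum_stdAddChar_eq hexpand t, ← mul_sum, hzero, mul_zero, sub_zero]

end FiberCount

section WalshValue

variable {p e : ℕ} [Fact p.Prime] {T : Type*} [Fintype T] {u : T → ZMod p} {ε : ℤ} {c : ZMod p}

theorem card_fiber_of_sum_eq_mul_sqrtpstar_pow_of_even (hp : Odd p) (he : Even e) (he0 : 0 < e)
    (hT : Fintype.card T = p ^ e)
    (h : ∑ x, ZMod.stdAddChar (u x) = (ε : ℂ) * sqrtpstar p ^ e * ZMod.stdAddChar c)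
    (t : ZMod p) :
    (Nat.card {x // u x = t} : ℤ) = (p : ℤ) ^ (e - 1)
      + ε * quadraticChar (ZMod p) (-1) ^ (e / 2) * (if c = t then (p : ℤ) - 1 else -1)
        * (p : ℤ) ^ (e / 2 - 1) := by
  obtain ⟨d, rfl⟩ : ∃ d, e = 2 * (d + 1) := ⟨e / 2 - 1, by grind⟩
  have hvalue : ∑ x, ZMod.stdAddChar (u x)
      = ((ε * (quadraticChar (ZMod p) (-1) * p) ^ (d + 1) : ℤ) : ℂ) * ZMod.stdAddChar c := by
    rw [h, pow_mul, sqrtpstar_sq_eq_quadraticChar hp]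
    push_cast
    rfl
  have hcount := mul_card_fiber_of_sum_eq_mul_stdAddChar hvalue t
  rw [hT] at hcount
  refine mul_left_cancel₀ (Int.natCast_ne_zero.2 (NeZero.ne p)) (hcount.trans ?_)
  rw [show 2 * (d + 1) - 1 = 2 * d + 1 by omega, Nat.mul_div_cancel_left _ two_pos,
    Nat.add_sub_cancel]
  push_cast
  ring

theorem card_fiber_of_sum_eq_mul_sqrtpstar_pow_of_odd (hp : Odd p) (he : Odd e)
    (hT : Fintype.card T = p ^ e)
    (h : ∑ x, ZMod.stdAddChar (u x) = (ε : ℂ) * sqrtpstar p ^ e * ZMod.stdAddChar c)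
    (t : ZMod p) :
    (Nat.card {x // u x = t} : ℤ) = (p : ℤ) ^ (e - 1)
      + ε * quadraticChar (ZMod p) (-1) ^ ((e + 1) / 2) * quadraticChar (ZMod p) (c - t)
        * (p : ℤ) ^ ((e - 1) / 2) := by
  obtain ⟨k, rfl⟩ := he
  have hvalue : ∑ x, ZMod.stdAddChar (u x)
      = ((ε * (quadraticChar (ZMod p) (-1) * p) ^ k : ℤ) : ℂ) * sqrtpstar p
        * ZMod.stdAddChar c := by
    rw [h, pow_succ, pow_mul, sqrtpstar_sq_eq_quadraticChar hp]
    push_cast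
    ring
  have hcount := mul_card_fiber_of_sum_eq_mul_sqrtpstar_mul_stdAddChar hp hvalue t
  rw [hT, ← neg_sub c t, ← neg_one_mul (c - t), map_mul] at hcount
  refine mul_left_cancel₀ (Int.natCast_ne_zero.2 (NeZero.ne p)) (hcount.trans ?_)
  rw [show (2 * k + 1 + 1) / 2 = k + 1 by omega, Nat.add_sub_cancel,
    Nat.mul_div_cancel_left _ two_pos]
  push_cast
  ring

end WalshValue

theorem qchar_eq_quadraticChar (F : Type*) [Field F] [Fintype F] [DecidableEq F] (y : F) :
    qchar F y = quadraticChar F y := by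
  rw [quadraticChar_apply, quadraticCharFun, qchar]
  split_ifs <;> rfl

section Trace

variable {p : ℕ} [Fact p.Prime] {Fq : Type*} [Field Fq] [Algebra (ZMod p) Fq]

theorem card_trace_mul_eq [Fintype Fq] {n : ℕ} (hcard : Fintype.card Fq = p ^ (n + 1)) {b : Fq}
    (hb : b ≠ 0) (s : ZMod p) :
    Nat.card {x : Fq // Algebra.trace (ZMod p) Fq (b * x) = s} = p ^ n := by
  let ψ : AddChar Fq ℂ := (ZMod.stdAddChar (N := p)).compAddMonoidHom
    ((Algebra.trace (ZMod p) Fq).toAddMonoidHom.comp (AddMonoidHom.mulLeft b))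
  have hψ : ψ ≠ 1 := by
    obtain ⟨z, hz⟩ := Algebra.trace_surjective (ZMod p) Fq 1
    refine AddChar.ne_one_iff.2 ⟨b⁻¹ * z, ?_⟩
    change ZMod.stdAddChar (Algebra.trace (ZMod p) Fq (b * (b⁻¹ * z))) ≠ 1
    rw [mul_inv_cancel_left₀ hb, hz, Ne, ← AddChar.map_zero_eq_one (ZMod.stdAddChar (N := p)),
      ZMod.injective_stdAddChar.eq_iff]
    exact one_ne_zero
  have hsum : ∑ x : Fq, (ZMod.stdAddChar (Algebra.trace (ZMod p) Fq (b * x)) : ℂ) = 0 :=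
    AddChar.sum_eq_zero_of_ne_one hψ
  have hcount := mul_card_fiber_of_sum_eq_mul_stdAddChar (A := 0) (c := 0) (by simpa using hsum) s
  rw [hcard, zero_mul, add_zero, pow_succ'] at hcount
  exact Nat.eq_of_mul_eq_mul_left (NeZero.pos p) (by exact_mod_cast hcount)

theorem card_mul_add_trace_eq (f : Fq → ZMod p) {a : ZMod p} (ha : a ≠ 0) (b : Fq) (s : ZMod p) :
    Nat.card {x : Fq // a * f x + Algebra.trace (ZMod p) Fq (b * x) = s}
      = Nat.card {x : Fq // f x - Algebra.trace (ZMod p) Fq (-b / algebraMap (ZMod p) Fq a * x)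
          = a⁻¹ * s} := by
  refine Nat.card_congr (Equiv.subtypeEquivRight fun x => ?_)
  have hsmul : -b / algebraMap (ZMod p) Fq a * x = (-a⁻¹) • (b * x) := by
    rw [Algebra.smul_def, map_neg, map_inv₀]
    ring
  rw [hsmul, map_smul, smul_eq_mul, eq_inv_mul_iff_mul_eq₀ ha, mul_sub, neg_mul, mul_neg,
    mul_inv_cancel_left₀ ha, sub_neg_eq_add]

end Trace

theorem stmt14_general (p e : ℕ) [Fact p.Prime] (hodd : Odd p) (he : 0 < e)
    (Fq : Type*) [Field Fq] [Fintype Fq] [Algebra (ZMod p) Fq]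
    (hcq : Fintype.card Fq = p ^ e)
    (f : Fq → ZMod p) (ε : ℤ) (fstar : Fq → ZMod p)
    (hwalsh : ∀ β : Fq,
      (∑ x : Fq, zetapc p ^ (f x - Algebra.trace (ZMod p) Fq (β * x)).val)
        = (ε : ℂ) * sqrtpstar p ^ e * zetapc p ^ (fstar β).val)
    (s : ZMod p) (hs : s ≠ 0) (a : ZMod p) (b : Fq)
    (Ns : ℕ)
    (hNs : Ns = Nat.card {x : Fq //
      a * f x + Algebra.trace (ZMod p) Fq (b * x) = s}) :
    (Even e →
      (a = 0 ∧ b = 0 → Ns = 0) ∧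
      (a = 0 ∧ b ≠ 0 → Ns = p ^ (e - 1)) ∧
      (a ≠ 0 ∧ fstar (-b / algebraMap (ZMod p) Fq a) = a⁻¹ * s →
        (Ns : ℤ) = (p : ℤ) ^ (e - 1)
          + ε * qchar (ZMod p) (-1) ^ (e / 2) * ((p : ℤ) - 1) * (p : ℤ) ^ (e / 2 - 1)) ∧
      (a ≠ 0 ∧ fstar (-b / algebraMap (ZMod p) Fq a) ≠ a⁻¹ * s →
        (Ns : ℤ) = (p : ℤ) ^ (e - 1)
          - ε * qchar (ZMod p) (-1) ^ (e / 2) * (p : ℤ) ^ (e / 2 - 1))) ∧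
    (Odd e →
      (a = 0 ∧ b = 0 → Ns = 0) ∧
      ((a = 0 ∧ b ≠ 0) ∨ (a ≠ 0 ∧ fstar (-b / algebraMap (ZMod p) Fq a) = a⁻¹ * s) →
        Ns = p ^ (e - 1)) ∧
      (a ≠ 0 ∧ fstar (-b / algebraMap (ZMod p) Fq a) ≠ a⁻¹ * s ∧
          qchar (ZMod p) (fstar (-b / algebraMap (ZMod p) Fq a) - a⁻¹ * s) = 1 →
        (Ns : ℤ) = (p : ℤ) ^ (e - 1)
          + ε * qchar (ZMod p) (-1) ^ ((e + 1) / 2) * (p : ℤ) ^ ((e - 1) / 2)) ∧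
      (a ≠ 0 ∧ fstar (-b / algebraMap (ZMod p) Fq a) ≠ a⁻¹ * s ∧
          qchar (ZMod p) (fstar (-b / algebraMap (ZMod p) Fq a) - a⁻¹ * s) = -1 →
        (Ns : ℤ) = (p : ℤ) ^ (e - 1)
          - ε * qchar (ZMod p) (-1) ^ ((e + 1) / 2) * (p : ℤ) ^ ((e - 1) / 2))) := by
  simp only [zetapc_pow_val] at hwalsh
  simp only [qchar_eq_quadraticChar]
  have hzero : a = 0 ∧ b = 0 → Ns = 0 := by
    rintro ⟨rfl, rfl⟩
    simp [hNs, hs.symm]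
  have hlinear : a = 0 ∧ b ≠ 0 → Ns = p ^ (e - 1) := by
    rintro ⟨rfl, hb⟩
    rw [← Nat.sub_add_cancel he] at hcq
    simpa only [hNs, zero_mul, zero_add] using card_trace_mul_eq hcq hb s
  have hbent (ha : a ≠ 0) := hNs.trans (card_mul_add_trace_eq f ha b s)
  refine ⟨fun hev => ⟨hzero, hlinear, ?_, ?_⟩, fun hod => ⟨hzero, ?_, ?_, ?_⟩⟩
  · rintro ⟨ha, hc⟩
    rw [hbent ha, card_fiber_of_sum_eq_mul_sqrtpstar_pow_of_even hodd hev he hcq (hwalsh _),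
      if_pos hc]
  · rintro ⟨ha, hc⟩
    rw [hbent ha, card_fiber_of_sum_eq_mul_sqrtpstar_pow_of_even hodd hev he hcq (hwalsh _),
      if_neg hc]
    ring
  · rintro (h | ⟨ha, hc⟩)
    · exact hlinear h
    · zify
      rw [hbent ha, card_fiber_of_sum_eq_mul_sqrtpstar_pow_of_odd hodd hod hcq (hwalsh _), hc]
      simp
  all_goals
    rintro ⟨ha, -, hc⟩
    rw [hbent ha, card_fiber_of_sum_eq_mul_sqrtpstar_pow_of_odd hodd hod hcq (hwalsh _), hc]
    ring

theorem stmt14 (p e q : ℕ) [Fact p.Prime] (hodd : Odd p) (he : 0 < e) (hq : q = p ^ e)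
    (Fq : Type) [Field Fq] [Fintype Fq] [Algebra (ZMod p) Fq]
    (hcq : Fintype.card Fq = q)
    (f : Fq → ZMod p) (ε : ℤ) (fstar : Fq → ZMod p) (hRF : IsRF p e Fq f ε fstar)
    (s : ZMod p) (hs : s ≠ 0) (a : ZMod p) (b : Fq)
    (Ns : ℕ)
    (hNs : Ns = Nat.card {x : Fq //
      a * f x + Algebra.trace (ZMod p) Fq (b * x) = s}) :
    (Even e →
      (a = 0 ∧ b = 0 → Ns = 0) ∧
      (a = 0 ∧ b ≠ 0 → Ns = p ^ (e - 1)) ∧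
      (a ≠ 0 ∧ fstar (-b / algebraMap (ZMod p) Fq a) = a⁻¹ * s →
        (Ns : ℤ) = (p : ℤ) ^ (e - 1)
          + ε * qchar (ZMod p) (-1) ^ (e / 2) * ((p : ℤ) - 1) * (p : ℤ) ^ (e / 2 - 1)) ∧
      (a ≠ 0 ∧ fstar (-b / algebraMap (ZMod p) Fq a) ≠ a⁻¹ * s →
        (Ns : ℤ) = (p : ℤ) ^ (e - 1)
          - ε * qchar (ZMod p) (-1) ^ (e / 2) * (p : ℤ) ^ (e / 2 - 1))) ∧
    (Odd e →
      (a = 0 ∧ b = 0 → Ns = 0) ∧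
      ((a = 0 ∧ b ≠ 0) ∨ (a ≠ 0 ∧ fstar (-b / algebraMap (ZMod p) Fq a) = a⁻¹ * s) →
        Ns = p ^ (e - 1)) ∧
      (a ≠ 0 ∧ fstar (-b / algebraMap (ZMod p) Fq a) ≠ a⁻¹ * s ∧
          qchar (ZMod p) (fstar (-b / algebraMap (ZMod p) Fq a) - a⁻¹ * s) = 1 →
        (Ns : ℤ) = (p : ℤ) ^ (e - 1)
          + ε * qchar (ZMod p) (-1) ^ ((e + 1) / 2) * (p : ℤ) ^ ((e - 1) / 2)) ∧
      (a ≠ 0 ∧ fstar (-b / algebraMap (ZMod p) Fq a) ≠ a⁻¹ * s ∧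
          qchar (ZMod p) (fstar (-b / algebraMap (ZMod p) Fq a) - a⁻¹ * s) = -1 →
        (Ns : ℤ) = (p : ℤ) ^ (e - 1)
          - ε * qchar (ZMod p) (-1) ^ ((e + 1) / 2) * (p : ℤ) ^ ((e - 1) / 2))) := by
  subst hq
  exact stmt14_general p e hodd he Fq hcq f ε fstar hRF.walsh s hs a b Ns hNs
end
end
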